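/- The natural homomorphism from PΓU(6,4) to the group Aut(P_X, ν_P) of permutations of the 891 planes of the Fermat cubic fourfold preserving the intersection pairing ν_P(Π,Π′) = Π·Π′ is an isomorphism; in particular |Aut(P_X, ν_P)| = 6·9196830720. -/

import Mathlib

open scoped BigOperators

/-- The field `F₄`. -/
abbrev F4 : Type := GaloisField 2 2

/-- The planes of the Fermat cubic fourfold `X : x₁³+⋯+x₆³ = 0`; all 891 of
them are defined over `F₄`, so they are taken as 3-dimensional `F₄`-subspaces
of `F₄⁶`. -/
def FermatPlane : Type :=
  {P : Submodule F4 (Fin 6 → F4) //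
    Module.finrank F4 ↥P = 3 ∧ ∀ x ∈ P, ∑ i, x i ^ 3 = 0}

/-- The `F₄`-rational points of `X`, as 1-dimensional subspaces of `F₄⁶`. -/
def FermatPoint : Type :=
  {p : Submodule F4 (Fin 6 → F4) //
    Module.finrank F4 ↥p = 1 ∧ ∀ x ∈ p, ∑ i, x i ^ 3 = 0}

/-- The intersection pairing `ν_P(Π,Π′) = (1−(−2)^(dim(Π∩Π′)+1))/3`, in terms
of the linear dimension `d = dim(Π∩Π′)+1`. -/
def icNum (d : ℕ) : ℚ := (1 - (-2 : ℚ) ^ d) / 3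

/-- A permutation of the planes preserving the pairing `ν_P`. -/
def PreservesNuP (σ : Equiv.Perm FermatPlane) : Prop :=
  ∀ P P' : FermatPlane,
    icNum (Module.finrank F4 ↥((σ P).val ⊓ (σ P').val))
      = icNum (Module.finrank F4 ↥(P.val ⊓ P'.val))

/-- A semilinear automorphism of `F₄⁶` (an element of `ΓL(6,4)`) preserving
the Fermat cubic; these represent exactly the elements of `PΓU(6,4)`. -/
def IsGammaU (φ : F4 ≃+* F4) (g : (Fin 6 → F4) ≃ (Fin 6 → F4)) : Prop :=
  (∀ x y, g (x + y) = g x + g y) ∧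
  (∀ (c : F4) (x), g (c • x) = φ c • g x) ∧
  (∀ x : Fin 6 → F4, ∑ i, x i ^ 3 = 0 → ∑ i, g x i ^ 3 = 0)


/-! ## Arithmetic of `F₄` -/

abbrev V6 : Type := Fin 6 → F4

theorem natcard_F4 : Nat.card F4 = 4 := by
  rw [GaloisField.card 2 2 (by norm_num)]; norm_num

theorem F4_cube {a : F4} (ha : a ≠ 0) : a ^ 3 = 1 := by
  have := Fintype.ofFinite F4
  have h := FiniteField.pow_card_sub_one_eq_one a ha
  rwa [← Nat.card_eq_fintype_card, natcard_F4] at h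

theorem F4_pow4 (a : F4) : a ^ 4 = a := by
  by_cases ha : a = 0
  · simp [ha]
  · rw [pow_succ, F4_cube ha, one_mul]

theorem F4_two (a : F4) : a + a = 0 := CharTwo.add_self_eq_zero a

theorem F4_sq_add (a b : F4) : (a + b) ^ 2 = a ^ 2 + b ^ 2 := CharTwo.add_sq a b

theorem F4_sq_inj {a b : F4} (h : a ^ 2 = b ^ 2) : a = b := by
  have h2 : (a ^ 2) ^ 2 = (b ^ 2) ^ 2 := by rw [h]
  rwa [← pow_mul, ← pow_mul, F4_pow4, F4_pow4] at h2

theorem F4_eq_of_add {a b : F4} (h : a + b = 0) : a = b := CharTwo.add_eq_zero.mp h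

theorem F4_bool {t : F4} (h : t ^ 2 = t) : t = 0 ∨ t = 1 := by
  have : t * (t - 1) = 0 := by linear_combination h
  rcases mul_eq_zero.mp this with h | h
  · exact Or.inl h
  · exact Or.inr (sub_eq_zero.mp h)

theorem exists_omega : ∃ w : F4, w ≠ 0 ∧ w ≠ 1 ∧ w ^ 2 = w + 1 := by
  have := Fintype.ofFinite F4
  classical
  have hc : ({0, 1} : Finset F4).card < Fintype.card F4 := by
    rw [← Nat.card_eq_fintype_card, natcard_F4]
    exact lt_of_le_of_lt Finset.card_le_two (by norm_num)
  obtain ⟨w, hw⟩ : ∃ w, w ∉ ({0, 1} : Finset F4) := by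
    by_contra! hcon
    have : ({0, 1} : Finset F4) = Finset.univ := by ext x; simp only [Finset.mem_univ, hcon x]
    rw [this, Finset.card_univ] at hc
    exact lt_irrefl _ hc
  simp only [Finset.mem_insert, Finset.mem_singleton, not_or] at hw
  refine ⟨w, hw.1, hw.2, ?_⟩
  have h3 := F4_cube hw.1
  have : (w - 1) * (w ^ 2 + w + 1) = 0 := by linear_combination h3
  rcases mul_eq_zero.mp this with h | h
  · exact absurd (sub_eq_zero.mp h) hw.2
  · apply F4_eq_of_add; linear_combination h

theorem F4_cases {w : F4} (h0 : w ≠ 0) (h1 : w ≠ 1) (h2 : w ^ 2 = w + 1) (a : F4) :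
    a = 0 ∨ a = 1 ∨ a = w ∨ a = w ^ 2 := by
  by_cases ha : a = 0
  · exact Or.inl ha
  have h3 := F4_cube ha
  have : (a - 1) * ((a - w) * (a - w ^ 2)) = 0 := by
    have e2 := F4_two 1
    have hw3 := F4_cube h0
    linear_combination h3 + (a^2 - a) * (-h2 - (w+1) * e2) + (a-1) * (hw3)
  grind

theorem exists_trace {t : F4} (ht : t ^ 2 = t) : ∃ l : F4, l + l ^ 2 = t := by
  rcases F4_bool ht with h | h
  · exact ⟨0, by simp [h]⟩
  · obtain ⟨w, -, -, hw⟩ := exists_omega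
    refine ⟨w, ?_⟩
    rw [hw, h, ← add_assoc, F4_two, zero_add]

/-! ## The Hermitian form -/

noncomputable def hm (x y : V6) : F4 := ∑ i, x i * y i ^ 2

theorem hm_self (x : V6) : hm x x = ∑ i, x i ^ 3 := by
  unfold hm; exact Finset.sum_congr rfl fun i _ => by ring

theorem hm_add_left (x y z : V6) : hm (x + y) z = hm x z + hm y z := by
  simp [hm, add_mul, Finset.sum_add_distrib]

theorem hm_add_right (x y z : V6) : hm x (y + z) = hm x y + hm x z := by
  simp [hm, F4_sq_add, mul_add, Finset.sum_add_distrib]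

theorem hm_smul_left (c : F4) (x y : V6) : hm (c • x) y = c * hm x y := by
  simp [hm, Finset.mul_sum, mul_assoc]

theorem hm_smul_right (c : F4) (x y : V6) : hm x (c • y) = c ^ 2 * hm x y := by
  simp only [hm, Finset.mul_sum, Pi.smul_apply, smul_eq_mul]
  exact Finset.sum_congr rfl fun i _ => by ring

theorem hm_zero_left (y : V6) : hm 0 y = 0 := by simp [hm]

theorem hm_zero_right (y : V6) : hm y 0 = 0 := by simp [hm]

theorem hm_sum_left {ι : Type*} (s : Finset ι) (v : ι → V6) (y : V6) :
    hm (∑ i ∈ s, v i) y = ∑ i ∈ s, hm (v i) y := by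
  classical
  induction s using Finset.induction_on with
  | empty => simp [hm_zero_left]
  | insert a s ha ih => rw [Finset.sum_insert ha, Finset.sum_insert ha, hm_add_left, ih]

theorem hm_sum_right {ι : Type*} (s : Finset ι) (v : ι → V6) (y : V6) :
    hm y (∑ i ∈ s, v i) = ∑ i ∈ s, hm y (v i) := by
  classical
  induction s using Finset.induction_on with
  | empty => simp [hm_zero_right]
  | insert a s ha ih => rw [Finset.sum_insert ha, Finset.sum_insert ha, hm_add_right, ih]

theorem F4_sum_sq {ι : Type*} (s : Finset ι) (v : ι → F4) :
    (∑ i ∈ s, v i) ^ 2 = ∑ i ∈ s, v i ^ 2 := by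
  classical
  induction s using Finset.induction_on with
  | empty => simp
  | insert a s ha ih => rw [Finset.sum_insert ha, Finset.sum_insert ha, F4_sq_add, ih]

theorem hm_symm (x y : V6) : hm y x = hm x y ^ 2 := by
  unfold hm
  rw [F4_sum_sq]
  refine Finset.sum_congr rfl fun i _ => ?_
  rw [mul_pow, ← pow_mul, F4_pow4, mul_comm]

theorem hm_comm_zero {x y : V6} (h : hm x y = 0) : hm y x = 0 := by
  rw [hm_symm, h]; simp

theorem hm_self_sq (x : V6) : hm x x ^ 2 = hm x x := (hm_symm x x).symm

theorem hm_nondeg {x : V6} (h : ∀ y, hm y x = 0) : x = 0 := by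
  funext i
  have := h (Pi.single i 1)
  unfold hm at this
  rw [Finset.sum_eq_single i] at this
  · simpa using this
  · intro j _ hj; simp [hj]
  · simp

/-- Polarization. -/
theorem hm_polar {x y : V6} (h : ∀ c : F4, hm (x + c • y) (x + c • y) = 0) : hm x y = 0 := by
  have hx : hm x x = 0 := by simpa using h 0
  have key : ∀ c : F4, c ^ 2 * hm x y + c * hm x y ^ 2 + c ^ 3 * hm y y = 0 := by
    intro c
    have := h c
    simp only [hm_add_left, hm_add_right, hm_smul_left, hm_smul_right, hx, hm_symm x y] at this
    linear_combination this
  obtain ⟨w, h0, h1, h2⟩ := exists_omega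
  have k1 := key 1
  have k2 := key w
  have k3 := F4_cube h0
  have e2 : (2 : F4) = 0 := by have := F4_two 1; rwa [one_add_one_eq_two] at this
  have : (w ^ 2 - 1) * hm x y + (w - 1) * hm x y ^ 2 = 0 := by
    linear_combination k2 - k1 - hm y y * k3
  have h3 : w * hm x y + (w - 1) * hm x y ^ 2 = 0 := by
    linear_combination this - hm x y * h2
  by_contra hne
  have h4 : w + (w - 1) * hm x y = 0 := by
    apply mul_left_cancel₀ hne; linear_combination h3
  have k4 := key (w ^ 2)
  have h5 : (w ^ 4 - 1) * hm x y + (w ^ 2 - 1) * hm x y ^ 2 = 0 := by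
    linear_combination k4 - k1 - (w ^ 3 + 1) * hm y y * k3
  rw [F4_pow4] at h5
  have h6 : (w - 1) * hm x y + w * hm x y ^ 2 = 0 := by linear_combination h5 - hm x y ^ 2 * h2
  have h7 : (w - 1) + w * hm x y = 0 := by
    apply mul_left_cancel₀ hne; linear_combination h6
  have h8 : (1 : F4) + hm x y = 0 := by linear_combination h7 - h4 + e2
  have h9 : hm x y = 1 := (F4_eq_of_add h8).symm
  rw [h9] at h7
  have : (1 : F4) = 0 := by linear_combination w * e2 - h7
  exact one_ne_zero this

/-! ## Totally isotropic subspaces -/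

theorem ti_finrank_le (W : Submodule F4 V6) (hW : ∀ x ∈ W, ∀ y ∈ W, hm x y = 0) :
    Module.finrank F4 W ≤ 3 := by
  set n := Module.finrank F4 W with hn
  let b := Module.finBasis F4 W
  let L : V6 →ₗ[F4] (Fin n → F4) :=
    { toFun := fun x i => hm x (b i)
      map_add' := fun x y => by funext i; simp [hm_add_left]
      map_smul' := fun c x => by funext i; simp [hm_smul_left] }
  have hsurj : LinearMap.range L = ⊤ := by
    by_contra hne
    obtain ⟨f, hf0, hf⟩ := Submodule.exists_le_ker_of_lt_top _ (lt_top_iff_ne_top.mpr hne)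
    have hfx : ∀ x : V6, ∑ i, f (Pi.single i 1) * hm x (b i) = 0 := by
      intro x
      have h1 : f (L x) = 0 := hf ⟨x, rfl⟩
      have h2 : L x = ∑ i, (hm x (b i)) • (Pi.single i (1 : F4) : Fin n → F4) := by
        exact pi_eq_sum_univ' (L x)
      rw [h2, map_sum] at h1
      rw [← h1]
      refine Finset.sum_congr rfl fun i _ => ?_
      rw [map_smul, smul_eq_mul, mul_comm]
    have hz : ∑ i, (f (Pi.single i 1)) ^ 2 • (b i : V6) = 0 := by
      apply hm_nondeg
      intro y
      rw [hm_sum_right, ← hfx y]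
      refine Finset.sum_congr rfl fun i _ => ?_
      rw [hm_smul_right, ← pow_mul, F4_pow4]
    have hz' : ∑ i, (f (Pi.single i 1)) ^ 2 • b i = 0 := by
      apply Subtype.ext
      simpa using hz
    have hli := Fintype.linearIndependent_iff.mp b.linearIndependent _ hz'
    apply hf0
    apply LinearMap.pi_ext'
    intro i
    ext
    simpa using hli i
  have hker : W ≤ LinearMap.ker L := by
    intro x hx
    rw [LinearMap.mem_ker]
    funext i
    exact hW x hx _ (b i).2
  have h1 := L.finrank_range_add_finrank_ker
  rw [hsurj, finrank_top] at h1
  simp only [Module.finrank_fintype_fun_eq_card, Fintype.card_fin] at h1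
  have h2 := Submodule.finrank_mono hker
  omega

theorem plane_ti (P : FermatPlane) {x y : V6} (hx : x ∈ P.val) (hy : y ∈ P.val) :
    hm x y = 0 := by
  apply hm_polar
  intro c
  rw [hm_self]
  exact P.2.2 _ (P.val.add_mem hx (P.val.smul_mem c hy))

/-- A vector isotropic and perpendicular to a plane lies in it. -/
theorem plane_max (P : FermatPlane) {b : V6} (hb : hm b b = 0) (h : ∀ x ∈ P.val, hm x b = 0) :
    b ∈ P.val := by
  by_contra hbP
  have hle := ti_finrank_le (P.val ⊔ Submodule.span F4 {b}) (by
    intro x hx y hy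
    obtain ⟨p, hp, _, hs, rfl⟩ := Submodule.mem_sup.mp hx
    obtain ⟨c, rfl⟩ := Submodule.mem_span_singleton.mp hs
    obtain ⟨p', hp', _, hs', rfl⟩ := Submodule.mem_sup.mp hy
    obtain ⟨c', rfl⟩ := Submodule.mem_span_singleton.mp hs'
    simp [hm_add_left, hm_add_right, hm_smul_left, hm_smul_right, plane_ti P hp hp', h p hp,
      hm_comm_zero (h p' hp'), hb])
  have hlt : P.val < P.val ⊔ Submodule.span F4 {b} := by
    refine lt_of_le_of_ne le_sup_left fun heq => hbP ?_
    rw [heq]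
    exact Submodule.mem_sup_right (Submodule.mem_span_singleton_self b)
  have := Submodule.finrank_lt_finrank_of_lt hlt
  rw [P.2.1] at this
  exact absurd (lt_of_lt_of_le this hle) (lt_irrefl _)

theorem plane_q (P : FermatPlane) {x : V6} (hx : x ∈ P.val) : hm x x = 0 := plane_ti P hx hx

/-- Key adjacency lemma. -/
theorem adj_lemma {A B : FermatPlane} (hAB : Module.finrank F4 ↥(A.val ⊓ B.val) = 2)
    {a b : V6} (ha : a ∈ A.val) (hb : b ∈ B.val) (hab : hm a b = 0) :
    a ∈ B.val ∨ b ∈ A.val := by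
  by_cases haB : a ∈ B.val
  · exact Or.inl haB
  right
  have hsup : (A.val ⊓ B.val) ⊔ Submodule.span F4 {a} = A.val := by
    have hle : (A.val ⊓ B.val) ⊔ Submodule.span F4 {a} ≤ A.val :=
      sup_le inf_le_left ((Submodule.span_singleton_le_iff_mem _ _).mpr ha)
    apply Submodule.eq_of_le_of_finrank_le hle
    have hlt : A.val ⊓ B.val < (A.val ⊓ B.val) ⊔ Submodule.span F4 {a} := by
      refine lt_of_le_of_ne le_sup_left fun heq => haB ?_
      have : a ∈ A.val ⊓ B.val := by
        rw [heq]
        exact Submodule.mem_sup_right (Submodule.mem_span_singleton_self a)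
      exact this.2
    have := Submodule.finrank_lt_finrank_of_lt hlt
    rw [A.2.1]
    omega
  apply plane_max A (plane_q B hb)
  intro x hx
  rw [← hsup] at hx
  obtain ⟨p, hp, _, hs, rfl⟩ := Submodule.mem_sup.mp hx
  obtain ⟨c, rfl⟩ := Submodule.mem_span_singleton.mp hs
  rw [hm_add_left, hm_smul_left, hab, plane_ti B hp.2 hb]
  simp

/-- Four planes forming a quadrangle around the point `x`. -/
structure Quad (P P' R1 R2 : FermatPlane) (x : V6) : Prop where
  hx : x ≠ 0
  hPP : P.val ⊓ P'.val = Submodule.span F4 {x}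
  hRR : R1.val ⊓ R2.val = Submodule.span F4 {x}
  h1 : Module.finrank F4 ↥(P.val ⊓ R1.val) = 2
  h2 : Module.finrank F4 ↥(P.val ⊓ R2.val) = 2
  h3 : Module.finrank F4 ↥(P'.val ⊓ R1.val) = 2
  h4 : Module.finrank F4 ↥(P'.val ⊓ R2.val) = 2

theorem finrank_inf_pos_of_mem {A B : Submodule F4 V6} {x : V6} (hx : x ≠ 0) (hA : x ∈ A)
    (hB : x ∈ B) : Module.finrank F4 ↥(A ⊓ B) ≠ 0 := by
  intro h
  rw [Submodule.finrank_eq_zero] at h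
  have : x ∈ A ⊓ B := ⟨hA, hB⟩
  rw [h] at this
  exact hx (by simpa using this)

theorem exists_of_finrank_inf {A B : Submodule F4 V6} (h : Module.finrank F4 ↥(A ⊓ B) ≠ 0) :
    ∃ x, x ≠ 0 ∧ x ∈ A ∧ x ∈ B := by
  have : A ⊓ B ≠ ⊥ := fun hb => h (by rw [hb]; simp)
  obtain ⟨x, hx, hx0⟩ := Submodule.exists_mem_ne_zero_of_ne_bot this
  exact ⟨x, hx0, hx.1, hx.2⟩

theorem mem_of_smul_span {Q : Submodule F4 V6} {x p : V6} (hp : p ≠ 0) (hpQ : p ∈ Q)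
    (h : p ∈ Submodule.span F4 {x}) : x ∈ Q := by
  obtain ⟨c, rfl⟩ := Submodule.mem_span_singleton.mp h
  have hc : c ≠ 0 := fun h0 => hp (by simp [h0])
  exact (Submodule.smul_mem_iff _ hc).mp hpQ

theorem quad_mem {P P' R1 R2 : FermatPlane} {x : V6} (H : Quad P P' R1 R2 x) (Q : FermatPlane) :
    x ∈ Q.val ↔ Module.finrank F4 ↥(Q.val ⊓ P.val) ≠ 0 ∧ Module.finrank F4 ↥(Q.val ⊓ P'.val) ≠ 0 ∧
      Module.finrank F4 ↥(Q.val ⊓ R1.val) ≠ 0 ∧ Module.finrank F4 ↥(Q.val ⊓ R2.val) ≠ 0 := by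
  have hxP : x ∈ P.val ⊓ P'.val := by rw [H.hPP]; exact Submodule.mem_span_singleton_self x
  have hxR : x ∈ R1.val ⊓ R2.val := by rw [H.hRR]; exact Submodule.mem_span_singleton_self x
  constructor
  · intro hQ
    exact ⟨finrank_inf_pos_of_mem H.hx hQ hxP.1, finrank_inf_pos_of_mem H.hx hQ hxP.2,
      finrank_inf_pos_of_mem H.hx hQ hxR.1, finrank_inf_pos_of_mem H.hx hQ hxR.2⟩
  · rintro ⟨k1, k2, k3, k4⟩
    obtain ⟨p, hp0, hpQ, hpP⟩ := exists_of_finrank_inf k1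
    obtain ⟨p', hp0', hpQ', hpP'⟩ := exists_of_finrank_inf k2
    obtain ⟨r, hr0, hrQ, hrR⟩ := exists_of_finrank_inf k3
    obtain ⟨s, hs0, hsQ, hsR⟩ := exists_of_finrank_inf k4
    by_contra hx
    have nP : ∀ v, v ≠ 0 → v ∈ Q.val → v ∈ P.val → v ∈ P'.val → False := by
      intro v hv hQ h1 h2
      exact hx (mem_of_smul_span hv hQ (by rw [← H.hPP]; exact ⟨h1, h2⟩))
    have nR : ∀ v, v ≠ 0 → v ∈ Q.val → v ∈ R1.val → v ∈ R2.val → False := by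
      intro v hv hQ h1 h2
      exact hx (mem_of_smul_span hv hQ (by rw [← H.hRR]; exact ⟨h1, h2⟩))
    have a1 := adj_lemma H.h1 hpP hrR (plane_ti Q hpQ hrQ)
    have a2 := adj_lemma H.h2 hpP hsR (plane_ti Q hpQ hsQ)
    have a3 := adj_lemma H.h3 hpP' hrR (plane_ti Q hpQ' hrQ)
    have a4 := adj_lemma H.h4 hpP' hsR (plane_ti Q hpQ' hsQ)
    rcases a1 with h | h
    · have b1 : p ∉ R2.val := fun h' => nR p hp0 hpQ h h'
      have b2 := a2.resolve_left b1
      have b3 : s ∉ P'.val := fun h' => nP s hs0 hsQ b2 h'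
      have b4 := a4.resolve_right b3
      rcases adj_lemma H.h2 hpP b4 (plane_ti Q hpQ hpQ') with h' | h'
      · exact b1 h'
      · exact nP p' hp0' hpQ' h' hpP'
    · have b1 : r ∉ P'.val := fun h' => nP r hr0 hrQ h h'
      have b2 := a3.resolve_right b1
      have b3 : p' ∉ R2.val := fun h' => nR p' hp0' hpQ' b2 h'
      have b4 := a4.resolve_left b3
      have b5 : s ∉ P.val := fun h' => nP s hs0 hsQ h' b4
      have b6 := a2.resolve_right b5
      rcases adj_lemma H.h1 hpP b2 (plane_ti Q hpQ hpQ') with h' | h'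
      · exact nR p hp0 hpQ h' b6
      · exact nP p' hp0' hpQ' h' hpP'


structure Hyp {k : ℕ} (e f : Fin k → V6) : Prop where
  ee : ∀ i j, hm (e i) (e j) = 0
  ff : ∀ i j, hm (f i) (f j) = 0
  ef : ∀ i j, hm (e i) (f j) = if i = j then 1 else 0

theorem Hyp.fe {k : ℕ} {e f : Fin k → V6} (H : Hyp e f) (i j : Fin k) :
    hm (f i) (e j) = if i = j then 1 else 0 := by
  rw [hm_symm, H.ef]
  by_cases h : i = j
  · simp [h]
  · simp [h, Ne.symm h]

theorem Hyp.cons {k : ℕ} {e f : Fin k → V6} (H : Hyp e f) {z y : V6}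
    (hz : hm z z = 0) (hy : hm y y = 0) (hzy : hm z y = 1)
    (hze : ∀ i, hm z (e i) = 0) (hzf : ∀ i, hm z (f i) = 0)
    (hye : ∀ i, hm y (e i) = 0) (hyf : ∀ i, hm y (f i) = 0) :
    Hyp (Fin.cons z e : Fin (k + 1) → V6) (Fin.cons y f : Fin (k + 1) → V6) := by
  refine ⟨?_, ?_, ?_⟩
  · intro i j
    refine Fin.cases ?_ (fun i => ?_) i <;> refine Fin.cases ?_ (fun j => ?_) j
    · simpa using hz
    · simpa using hze j
    · simpa using hm_comm_zero (hze i)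
    · simpa using H.ee i j
  · intro i j
    refine Fin.cases ?_ (fun i => ?_) i <;> refine Fin.cases ?_ (fun j => ?_) j
    · simpa using hy
    · simpa using hyf j
    · simpa using hm_comm_zero (hyf i)
    · simpa using H.ff i j
  · intro i j
    refine Fin.cases ?_ (fun i => ?_) i <;> refine Fin.cases ?_ (fun j => ?_) j
    · simpa using hzy
    · simpa [eq_comm, (Fin.succ_ne_zero j)] using hzf j
    · simpa [Fin.succ_ne_zero i] using hm_comm_zero (hye i)
    · simpa [Fin.succ_inj] using H.ef i j

theorem Hyp.partner {k : ℕ} {e f : Fin k → V6} (H : Hyp e f) {z : V6} (hz0 : z ≠ 0)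
    (hz : hm z z = 0) (hze : ∀ i, hm z (e i) = 0) (hzf : ∀ i, hm z (f i) = 0) :
    ∃ y, Hyp (Fin.cons z e : Fin (k + 1) → V6) (Fin.cons y f : Fin (k + 1) → V6) := by
  obtain ⟨y0, hy0⟩ : ∃ y0, hm z y0 = 1 := by
    by_contra! hcon
    apply hz0
    apply hm_nondeg
    intro y
    by_contra hne
    have hne' : hm z y ≠ 0 := fun h => hne (hm_comm_zero h)
    apply hcon ((hm z y) • y)
    rw [hm_smul_right, ← pow_succ, F4_cube hne']
  set y1 := y0 + ∑ i, (hm y0 (f i) • e i + hm y0 (e i) • f i) with hy1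
  have h1 : hm z y1 = 1 := by
    rw [hy1, hm_add_right, hm_sum_right, hy0, Finset.sum_eq_zero, add_zero]
    intro i _
    simp [hm_add_right, hm_smul_right, hze, hzf]
  have h2 : ∀ j, hm y1 (e j) = 0 := by
    intro j
    rw [hy1, hm_add_left, hm_sum_left]
    simp [hm_add_left, hm_smul_left, H.ee, H.fe, F4_two]
  have h3 : ∀ j, hm y1 (f j) = 0 := by
    intro j
    rw [hy1, hm_add_left, hm_sum_left]
    simp [hm_add_left, hm_smul_left, H.ff, H.ef, F4_two]
  obtain ⟨l, hl⟩ := exists_trace (hm_self_sq y1)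
  refine ⟨y1 + l • z, H.cons hz ?_ ?_ hze hzf ?_ ?_⟩
  · have h4 : hm y1 z = 1 := by rw [hm_symm, h1]; simp
    simp only [hm_add_left, hm_add_right, hm_smul_left, hm_smul_right, h1, h4, hz]
    have := F4_two (hm y1 y1)
    linear_combination this + hl
  · simp [hm_add_right, hm_smul_right, h1, hz]
  · intro i; simp [hm_add_left, hm_smul_left, h2, hze]
  · intro i; simp [hm_add_left, hm_smul_left, h3, hzf]

theorem iso_of_two {u v : V6} (h : LinearIndependent F4 ![u, v]) :
    ∃ a b : F4, a • u + b • v ≠ 0 ∧ hm (a • u + b • v) (a • u + b • v) = 0 := by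
  rw [LinearIndependent.pair_iff] at h
  have hne : ∀ a b : F4, (a ≠ 0 ∨ b ≠ 0) → a • u + b • v ≠ 0 := by
    intro a b hab h0
    have := h a b h0
    tauto
  rcases F4_bool (hm_self_sq u) with hu | hu
  · exact ⟨1, 0, hne _ _ (by simp), by simpa using hu⟩
  rcases F4_bool (hm_self_sq v) with hv | hv
  · exact ⟨0, 1, hne _ _ (by simp), by simpa using hv⟩
  obtain ⟨a, ha, ht⟩ : ∃ a : F4, a ≠ 0 ∧ (a * hm u v) ^ 2 = a * hm u v := by
    by_cases h0 : hm u v = 0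
    · exact ⟨1, one_ne_zero, by simp [h0]⟩
    · exact ⟨(hm u v)⁻¹, inv_ne_zero h0, by simp [h0]⟩
  refine ⟨a, 1, hne _ _ (by simp), ?_⟩
  simp only [hm_add_left, hm_add_right, hm_smul_left, hm_smul_right, hm_symm u v, hu, hv]
  have h3 := F4_cube ha
  have e1 := F4_two 1
  have e2 := F4_two (a * hm u v)
  linear_combination ht + h3 + e1 + e2

theorem Hyp.exists_iso {k : ℕ} (hk : k ≤ 2) (e f : Fin k → V6) :
    ∃ z, z ≠ 0 ∧ hm z z = 0 ∧ (∀ i, hm z (e i) = 0) ∧ (∀ i, hm z (f i) = 0) := by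
  let L : V6 →ₗ[F4] ((Fin k → F4) × (Fin k → F4)) :=
    { toFun := fun x => (fun i => hm x (e i), fun i => hm x (f i))
      map_add' := fun x y => by ext i <;> simp [hm_add_left]
      map_smul' := fun c x => by ext i <;> simp [hm_smul_left] }
  have h1 := L.finrank_range_add_finrank_ker
  have h2 := Submodule.finrank_le (LinearMap.range L)
  simp only [Module.finrank_prod, Module.finrank_fintype_fun_eq_card, Fintype.card_fin] at h1 h2
  have h3 : 2 ≤ Module.finrank F4 (LinearMap.ker L) := by omega
  obtain ⟨w, hw⟩ := exists_linearIndependent_of_le_finrank h3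
  have hw' : LinearIndependent F4 ![(w 0 : V6), (w 1 : V6)] := by
    have := hw.map' (LinearMap.ker L).subtype (Submodule.ker_subtype _)
    have heq : ![(w 0 : V6), (w 1 : V6)] = ⇑(LinearMap.ker L).subtype ∘ w := by
      funext i
      fin_cases i <;> rfl
    rw [heq]
    exact this
  obtain ⟨a, b, hne, hq⟩ := iso_of_two hw'
  have hmem : a • (w 0 : V6) + b • (w 1 : V6) ∈ LinearMap.ker L :=
    Submodule.add_mem _ (Submodule.smul_mem _ _ (w 0).2) (Submodule.smul_mem _ _ (w 1).2)
  have hL := LinearMap.mem_ker.mp hmem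
  exact ⟨_, hne, hq, fun i => congrFun (congrArg Prod.fst hL) i,
    fun i => congrFun (congrArg Prod.snd hL) i⟩

theorem Hyp.grow {k : ℕ} (hk : k ≤ 2) {e f : Fin k → V6} (H : Hyp e f) :
    ∃ z y, Hyp (Fin.cons z e : Fin (k + 1) → V6) (Fin.cons y f : Fin (k + 1) → V6) := by
  obtain ⟨z, h0, hz, h1, h2⟩ := Hyp.exists_iso hk e f
  obtain ⟨y, hy⟩ := H.partner h0 hz h1 h2
  exact ⟨z, y, hy⟩

theorem Hyp.start {z : V6} (hz0 : z ≠ 0) (hz : hm z z = 0) :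
    ∃ y, Hyp ![z] ![y] := by
  have H0 : Hyp (Fin.elim0 : Fin 0 → V6) Fin.elim0 :=
    ⟨fun i => i.elim0, fun i => i.elim0, fun i => i.elim0⟩
  obtain ⟨y, hy⟩ := H0.partner hz0 hz (fun i => i.elim0) (fun i => i.elim0)
  refine ⟨y, ?_⟩
  have heq : ∀ v : V6, ![v] = (Fin.cons v (Fin.elim0 : Fin 0 → V6) : Fin 1 → V6) := by
    intro v
    funext i
    fin_cases i
    rfl
  rw [heq z, heq y]
  exact hy

theorem exists_hyp_point {z : V6} (hz0 : z ≠ 0) (hz : hm z z = 0) :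
    ∃ e f : Fin 3 → V6, Hyp e f ∧ e 2 = z := by
  obtain ⟨y, H1⟩ := Hyp.start hz0 hz
  obtain ⟨z2, y2, H2⟩ := H1.grow (by norm_num)
  obtain ⟨z3, y3, H3⟩ := H2.grow (by norm_num)
  exact ⟨_, _, H3, rfl⟩

theorem exists_hyp_pair {z w : V6} (hz0 : z ≠ 0) (hz : hm z z = 0)
    (hw : hm w w = 0) (hzw : hm z w = 0) :
    ∃ e f : Fin 3 → V6, Hyp e f ∧ e 2 = z ∧ w ∈ Submodule.span F4 (Set.range e) := by
  by_cases hsp : ∃ c : F4, w = c • z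
  · obtain ⟨c, rfl⟩ := hsp
    obtain ⟨e, f, H, he⟩ := exists_hyp_point hz0 hz
    exact ⟨e, f, H, he, Submodule.smul_mem _ _ (Submodule.subset_span ⟨2, he⟩)⟩
  push Not at hsp
  obtain ⟨y, H1⟩ := Hyp.start hz0 hz
  have hzy : hm z y = 1 := by simpa using H1.ef 0 0
  have hwz := hm_comm_zero hzw
  have hw0 : w + hm w y • z ≠ 0 := by
    intro h
    refine hsp (-(hm w y)) ?_
    rw [neg_smul]
    exact eq_neg_of_add_eq_zero_left h
  obtain ⟨y2, H2⟩ := H1.partner hw0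
    (by simp [hm_add_left, hm_add_right, hm_smul_left, hm_smul_right, hz, hw, hzw, hwz])
    (by intro i; simp [hm_add_left, hm_smul_left, hz, hwz])
    (by intro i; simp [hm_add_left, hm_smul_left, hzy, F4_two])
  obtain ⟨z3, y3, H3⟩ := H2.grow (by norm_num)
  refine ⟨_, _, H3, rfl, ?_⟩
  refine (Submodule.add_mem_iff_left (y := hm w y • z) _ ?_).mp (Submodule.subset_span ⟨1, rfl⟩)
  exact Submodule.smul_mem _ (hm w y) (Submodule.subset_span ⟨2, rfl⟩)

/-! ### Coordinates -/

abbrev M6 : Type := (Fin 3 → F4) × (Fin 3 → F4)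

/-- the form on the coordinate space. -/
noncomputable def hh (p r : M6) : F4 := ∑ i, (p.1 i * r.2 i ^ 2 + p.2 i * r.1 i ^ 2)

noncomputable def io (e f : Fin 3 → V6) (p : M6) : V6 := ∑ i, (p.1 i • e i + p.2 i • f i)

theorem io_e {e f : Fin 3 → V6} (H : Hyp e f) (p : M6) (i : Fin 3) :
    hm (io e f p) (e i) = p.2 i := by
  rw [io, hm_sum_left]
  simp [hm_add_left, hm_smul_left, H.ee, H.fe]

theorem io_f {e f : Fin 3 → V6} (H : Hyp e f) (p : M6) (i : Fin 3) :
    hm (io e f p) (f i) = p.1 i := by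
  rw [io, hm_sum_left]
  simp [hm_add_left, hm_smul_left, H.ff, H.ef]

theorem io_hm {e f : Fin 3 → V6} (H : Hyp e f) (p r : M6) :
    hm (io e f p) (io e f r) = hh p r := by
  rw [show io e f r = ∑ i, (r.1 i • e i + r.2 i • f i) from rfl, hm_sum_right, hh]
  refine Finset.sum_congr rfl fun i _ => ?_
  rw [hm_add_right, hm_smul_right, hm_smul_right, io_e H, io_f H]
  ring

theorem io_bij {e f : Fin 3 → V6} (H : Hyp e f) : Function.Bijective (io e f) := by
  have hinj : Function.Injective (io e f) := by
    intro p r h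
    ext i
    · rw [← io_f H p, h, io_f H]
    · rw [← io_e H p, h, io_e H]
  apply hinj.bijective_of_nat_card_le
  simp [Nat.card_prod, Nat.card_fun, natcard_F4]

theorem hyp_expand {e f : Fin 3 → V6} (H : Hyp e f) (x : V6) :
    x = ∑ i, (hm x (f i) • e i + hm x (e i) • f i) := by
  obtain ⟨p, rfl⟩ := (io_bij H).2 x
  simp only [io_e H, io_f H]
  rfl

theorem io_add (e f : Fin 3 → V6) (p r : M6) : io e f (p + r) = io e f p + io e f r := by
  simp only [io, ← Finset.sum_add_distrib]
  refine Finset.sum_congr rfl fun i _ => ?_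
  simp only [Prod.fst_add, Prod.snd_add, Pi.add_apply, add_smul]
  abel

theorem io_smul (e f : Fin 3 → V6) (c : F4) (p : M6) : io e f (c • p) = c • io e f p := by
  simp only [io, Finset.smul_sum]
  refine Finset.sum_congr rfl fun i _ => ?_
  simp [smul_smul]

theorem Hyp.li {e f : Fin 3 → V6} (H : Hyp e f) : LinearIndependent F4 e := by
  rw [Fintype.linearIndependent_iff]
  intro g hg i
  have h := congrArg (fun v => hm v (f i)) hg
  simpa [hm_sum_left, hm_smul_left, H.ef, hm_zero_left] using h

noncomputable def Hyp.plane {e f : Fin 3 → V6} (H : Hyp e f) : FermatPlane :=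
  ⟨Submodule.span F4 (Set.range e), by
    rw [finrank_span_eq_card H.li]; simp, by
    intro x hx
    rw [← hm_self]
    obtain ⟨c, rfl⟩ := (Submodule.mem_span_range_iff_exists_fun F4).mp hx
    rw [hm_sum_left]
    refine Finset.sum_eq_zero fun i _ => ?_
    rw [hm_smul_left, hm_sum_right, Finset.sum_eq_zero, mul_zero]
    intro j _
    rw [hm_smul_right, H.ee, mul_zero]⟩

theorem Hyp.mem_plane {e f : Fin 3 → V6} (H : Hyp e f) (x : V6) :
    x ∈ H.plane.val ↔ ∀ i, hm x (e i) = 0 := by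
  constructor
  · intro hx i
    exact plane_ti H.plane hx (Submodule.subset_span ⟨i, rfl⟩)
  · intro h
    rw [hyp_expand H x]
    refine Submodule.sum_mem _ fun i _ => ?_
    rw [h i, zero_smul, add_zero]
    exact Submodule.smul_mem _ _ (Submodule.subset_span ⟨i, rfl⟩)

/-- swap some vectors of `e` with the corresponding vectors of `f`. -/
def fl (T : Fin 3 → Bool) (e f : Fin 3 → V6) : Fin 3 → V6 := fun i => if T i then e i else f i

theorem Hyp.fl {e f : Fin 3 → V6} (H : Hyp e f) (T : Fin 3 → Bool) :
    Hyp (fl T e f) (fl T f e) := by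
  refine ⟨?_, ?_, ?_⟩ <;> intro i j <;> unfold _root_.fl <;>
    cases hi : T i <;> cases hj : T j <;>
    simp only [H.ee, H.ff, H.ef, H.fe, if_true, if_false, Bool.false_eq_true] <;>
    (rw [if_neg]; rintro rfl; simp_all)

theorem fl_inter {e f : Fin 3 → V6} (H : Hyp e f) (T T' : Fin 3 → Bool) :
    (H.fl T).plane.val ⊓ (H.fl T').plane.val =
      Submodule.span F4 (Set.range fun i : {i // T i = T' i} => fl T e f i) := by
  apply le_antisymm
  · rintro x ⟨h1, h2⟩
    have h1 := (Hyp.mem_plane _ x).mp h1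
    have h2 := (Hyp.mem_plane _ x).mp h2
    rw [hyp_expand (H.fl T) x]
    refine Submodule.sum_mem _ fun i _ => ?_
    rw [h1 i, zero_smul, add_zero]
    by_cases hT : T i = T' i
    · exact Submodule.smul_mem _ _ (Submodule.subset_span ⟨⟨i, hT⟩, rfl⟩)
    · have h3 : hm x (fl T f e i) = 0 := by
        rw [← h2 i]
        unfold fl
        cases h : T i <;> cases h' : T' i <;> simp_all
      rw [h3, zero_smul]
      exact Submodule.zero_mem _
  · rw [Submodule.span_le]
    rintro _ ⟨⟨i, hi⟩, rfl⟩
    refine ⟨Submodule.subset_span ⟨i, rfl⟩, Submodule.subset_span ⟨i, ?_⟩⟩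
    simp only [fl, hi]

theorem fl_finrank {e f : Fin 3 → V6} (H : Hyp e f) (T T' : Fin 3 → Bool) :
    Module.finrank F4 ↥((H.fl T).plane.val ⊓ (H.fl T').plane.val) =
      Fintype.card {i // T i = T' i} := by
  rw [fl_inter H, finrank_span_eq_card]
  exact (H.fl T).li.comp _ Subtype.val_injective

theorem exists_quad {z : V6} (hz0 : z ≠ 0) (hz : hm z z = 0) :
    ∃ P P' R1 R2, Quad P P' R1 R2 z := by
  obtain ⟨e, f, H, rfl⟩ := exists_hyp_point hz0 hz
  refine ⟨(H.fl ![true, true, true]).plane, (H.fl ![false, false, true]).plane,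
    (H.fl ![true, false, true]).plane, (H.fl ![false, true, true]).plane, hz0, ?_, ?_, ?_, ?_, ?_, ?_⟩
  · rw [fl_inter H]
    congr 1
    ext x
    constructor
    · rintro ⟨⟨i, hi⟩, rfl⟩
      match i, hi with
      | 0, hi => exact absurd hi (by decide)
      | 1, hi => exact absurd hi (by decide)
      | 2, hi => rfl
    · rintro rfl
      exact ⟨⟨2, rfl⟩, rfl⟩
  · rw [fl_inter H]
    congr 1
    ext x
    constructor
    · rintro ⟨⟨i, hi⟩, rfl⟩
      match i, hi with
      | 0, hi => exact absurd hi (by decide)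
      | 1, hi => exact absurd hi (by decide)
      | 2, hi => rfl
    · rintro rfl
      exact ⟨⟨2, rfl⟩, rfl⟩
  all_goals
    rw [fl_finrank H]
    decide

theorem exists_plane_pair {z w : V6} (hz0 : z ≠ 0) (hz : hm z z = 0)
    (hw : hm w w = 0) (hzw : hm z w = 0) : ∃ P : FermatPlane, z ∈ P.val ∧ w ∈ P.val := by
  obtain ⟨e, f, H, h1, h2⟩ := exists_hyp_pair hz0 hz hw hzw
  exact ⟨H.plane, Submodule.subset_span ⟨2, h1⟩, h2⟩

/-! ## Rigidity -/

noncomputable def dt (a b : Fin 3 → F4) : F4 := ∑ i, a i * b i ^ 2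

theorem hh_dt (p r : M6) : hh p r = dt p.1 r.2 + dt p.2 r.1 := by
  simp [hh, dt, Finset.sum_add_distrib]

theorem dt_three (a b : Fin 3 → F4) : dt a b = a 0 * b 0 ^ 2 + a 1 * b 1 ^ 2 + a 2 * b 2 ^ 2 := by
  simp [dt, Fin.sum_univ_three]

theorem dt_zero_left (b : Fin 3 → F4) : dt 0 b = 0 := by simp [dt]

theorem dt_zero_right (b : Fin 3 → F4) : dt b 0 = 0 := by simp [dt]

theorem dt_smul_left (c : F4) (a b : Fin 3 → F4) : dt (c • a) b = c * dt a b := by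
  simp only [dt_three, Pi.smul_apply, smul_eq_mul]; ring

theorem dt_smul_right (c : F4) (a b : Fin 3 → F4) : dt a (c • b) = c ^ 2 * dt a b := by
  simp only [dt_three, Pi.smul_apply, smul_eq_mul]; ring

theorem dt_symm (a b : Fin 3 → F4) : dt b a = dt a b ^ 2 := by
  unfold dt
  rw [F4_sum_sq]
  refine Finset.sum_congr rfl fun i _ => ?_
  rw [mul_pow, ← pow_mul, F4_pow4, mul_comm]

structure PRel (R : M6 → M6 → Prop) : Prop where
  tot : ∀ p, p ≠ 0 → hh p p = 0 → ∃ r, r ≠ 0 ∧ hh r r = 0 ∧ R p r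
  perp : ∀ p r p' r', R p r → R p' r' → (hh p p' = 0 ↔ hh r r' = 0)
  scale : ∀ p r (c : F4), c ≠ 0 → R p r → R p (c • r)
  scale' : ∀ p r (c : F4), c ≠ 0 → R p r → R (c • p) r

structure PBase (R : M6 → M6 → Prop) (w : F4) : Prop where
  e0 : R (![1, 0, 0], 0) (![1, 0, 0], 0)
  e1 : R (![0, 1, 0], 0) (![0, 1, 0], 0)
  e2 : R (![0, 0, 1], 0) (![0, 0, 1], 0)
  f0 : R (0, ![1, 0, 0]) (0, ![1, 0, 0])
  f1 : R (0, ![0, 1, 0]) (0, ![0, 1, 0])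
  f2 : R (0, ![0, 0, 1]) (0, ![0, 0, 1])
  e01 : R (![1, 1, 0], 0) (![1, 1, 0], 0)
  e02 : R (![1, 0, 1], 0) (![1, 0, 1], 0)
  e0w : R (![1, w, 0], 0) (![1, w, 0], 0)

theorem Eclos {R : M6 → M6 → Prop} (HR : PRel R) {w : F4} (HB : PBase R w) {a : Fin 3 → F4}
    (ha : a ≠ 0)
    (h : ∀ a', a' ≠ 0 → (∀ b, R (0, b) (0, b) → (dt a b = 0 ↔ dt a' b = 0)) →
      ∃ c : F4, c ≠ 0 ∧ c • a' = a) : R (a, 0) (a, 0) := by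
  obtain ⟨⟨a', b'⟩, h0, -, hr⟩ := HR.tot (a, 0) (by simpa using ha)
    (by simp [hh_dt, dt_zero_left, dt_zero_right])
  have k0 := HR.perp _ _ _ _ hr HB.e0
  have k1 := HR.perp _ _ _ _ hr HB.e1
  have k2 := HR.perp _ _ _ _ hr HB.e2
  simp [hh_dt, dt_three] at k0 k1 k2
  have hb' : b' = 0 := by funext i; fin_cases i <;> simp [k0, k1, k2]
  subst hb'
  have ha' : a' ≠ 0 := fun hz => h0 (by simp [hz])
  obtain ⟨c, hc, hca⟩ := h a' ha' (by
    intro b hb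
    have := HR.perp _ _ _ _ hr hb
    simpa [hh_dt, dt_zero_left] using this)
  have := HR.scale _ _ c hc hr
  rwa [Prod.smul_mk, hca, smul_zero] at this

theorem Fclos {R : M6 → M6 → Prop} (HR : PRel R) {w : F4} (HB : PBase R w) {a : Fin 3 → F4}
    (ha : a ≠ 0)
    (h : ∀ a', a' ≠ 0 → (∀ b, R (b, 0) (b, 0) → (dt a b = 0 ↔ dt a' b = 0)) →
      ∃ c : F4, c ≠ 0 ∧ c • a' = a) : R (0, a) (0, a) := by
  obtain ⟨⟨b', a'⟩, h0, -, hr⟩ := HR.tot (0, a) (by simpa using ha)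
    (by simp [hh_dt, dt_zero_left, dt_zero_right])
  have k0 := HR.perp _ _ _ _ hr HB.f0
  have k1 := HR.perp _ _ _ _ hr HB.f1
  have k2 := HR.perp _ _ _ _ hr HB.f2
  simp [hh_dt, dt_three] at k0 k1 k2
  have hb' : b' = 0 := by funext i; fin_cases i <;> simp [k0, k1, k2]
  subst hb'
  have ha' : a' ≠ 0 := fun hz => h0 (by simp [hz])
  obtain ⟨c, hc, hca⟩ := h a' ha' (by
    intro b hb
    have := HR.perp _ _ _ _ hr hb
    simpa [hh_dt, dt_zero_left] using this)
  have := HR.scale _ _ c hc hr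
  rwa [Prod.smul_mk, hca, smul_zero] at this

def SF (R : M6 → M6 → Prop) (a : Fin 3 → F4) : Prop := R (a, 0) (a, 0) ∧ R (0, a) (0, a)

theorem Sclos {R : M6 → M6 → Prop} (HR : PRel R) {w : F4} (HB : PBase R w) {a : Fin 3 → F4}
    (ha : a ≠ 0)
    (h : ∀ a', a' ≠ 0 → (∀ b, SF R b → (dt a b = 0 ↔ dt a' b = 0)) →
      ∃ c : F4, c ≠ 0 ∧ c • a' = a) : SF R a := by
  exact ⟨Eclos HR HB ha fun a' ha' hb => h a' ha' fun b hS => hb b hS.2,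
    Fclos HR HB ha fun a' ha' hb => h a' ha' fun b hS => hb b hS.1⟩

theorem vec_smul {a' : Fin 3 → F4} {x y z : F4} {k : F4} (hk : k ≠ 0) (h0 : a' 0 = k * x)
    (h1 : a' 1 = k * y) (h2 : a' 2 = k * z) : ∃ c : F4, c ≠ 0 ∧ c • a' = ![x, y, z] := by
  refine ⟨k⁻¹, inv_ne_zero hk, ?_⟩
  funext i
  fin_cases i <;> simp [h0, h1, h2, hk]

theorem solve2 {x y c : F4} (hc : c ≠ 0) (h : x + y * c ^ 2 = 0) : y = x * c := by
  apply F4_eq_of_add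
  linear_combination c * h - y * F4_cube hc



theorem F_of_E01 {R : M6 → M6 → Prop} (HR : PRel R) {w : F4} (HB : PBase R w)
    {c : F4} (hc : c ≠ 0) (h : R (![1, c, 0], 0) (![1, c, 0], 0)) :
    SF R ![1, c, 0] := by
  refine ⟨h, Fclos HR HB (fun h0 => by simpa using congrFun h0 0) ?_⟩
  intro a' _ hb
  have k0 := hb _ HB.e0
  have k2 := hb _ HB.e2
  have k3 := hb _ h
  simp [dt_three] at k0 k2 k3
  have h3 := F4_cube hc
  have k4 := k3.mp (by linear_combination h3 + F4_two 1)
  exact vec_smul (k := a' 0) k0 (by ring) (solve2 hc k4) (by simp [k2])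

theorem F_of_E02 {R : M6 → M6 → Prop} (HR : PRel R) {w : F4} (HB : PBase R w)
    {c : F4} (hc : c ≠ 0) (h : R (![1, 0, c], 0) (![1, 0, c], 0)) :
    SF R ![1, 0, c] := by
  refine ⟨h, Fclos HR HB (fun h0 => by simpa using congrFun h0 0) ?_⟩
  intro a' _ hb
  have k0 := hb _ HB.e0
  have k2 := hb _ HB.e1
  have k3 := hb _ h
  simp [dt_three] at k0 k2 k3
  have h3 := F4_cube hc
  have k4 := k3.mp (by linear_combination h3 + F4_two 1)
  exact vec_smul (k := a' 0) k0 (by ring) (by simp [k2]) (solve2 hc k4)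

theorem S0 {R : M6 → M6 → Prop} (_HR : PRel R) {w : F4} (HB : PBase R w)
    : SF R ![1, 0, 0] := ⟨HB.e0, HB.f0⟩
theorem S1 {R : M6 → M6 → Prop} (_HR : PRel R) {w : F4} (HB : PBase R w)
    : SF R ![0, 1, 0] := ⟨HB.e1, HB.f1⟩
theorem S2 {R : M6 → M6 → Prop} (_HR : PRel R) {w : F4} (HB : PBase R w)
    : SF R ![0, 0, 1] := ⟨HB.e2, HB.f2⟩

theorem S_i {R : M6 → M6 → Prop} (HR : PRel R) {w : F4} (HB : PBase R w)
    (w0 : w ≠ 0) (w1 : w ≠ 1) (w2 : w ^ 2 = w + 1) {c : F4} (hc : c ≠ 0) :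
    SF R ![1, c, 0] := by
  have s1 := F_of_E01 HR HB one_ne_zero HB.e01
  have sw := F_of_E01 HR HB w0 HB.e0w
  rcases F4_cases w0 w1 w2 c with h | h | h | h
  · exact absurd h hc
  · rw [h]; exact s1
  · rw [h]; exact sw
  subst h
  have w3 := F4_cube w0
  refine Sclos HR HB (fun h0 => by simpa using congrFun h0 0) ?_
  intro a' _ hb
  have k0 := hb _ (S0 HR HB)
  have k1 := hb _ (S1 HR HB)
  have k2 := hb _ (S2 HR HB)
  have k3 := hb _ s1
  have k4 := hb _ sw
  simp [dt_three] at k0 k1 k2 k3 k4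
  refine vec_smul (k := a' 0) k0 (by ring) ?_ (by simp [k2])
  have n3 : a' 0 + a' 1 ≠ 0 := by
    intro hz
    have := k3.mpr hz
    apply w0
    linear_combination this - w2 - F4_two 1
  have n4 : a' 0 + a' 1 * w ^ 2 ≠ 0 := by
    intro hz
    have := k4.mpr hz
    apply w1
    linear_combination this - w * w3 - F4_two 1
  rcases F4_cases w0 w1 w2 (a' 1 / a' 0) with h | h | h | h
  · rcases div_eq_zero_iff.mp h with h | h
    · exact absurd (k1.mpr h) w0
    · exact absurd h k0
  · rw [div_eq_iff k0] at h
    exact absurd (by rw [h, one_mul, F4_two]) n3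
  · rw [div_eq_iff k0] at h
    exact absurd (by rw [h]; linear_combination a' 0 * w3 + F4_two (a' 0)) n4
  · rw [div_eq_iff k0] at h
    rw [h, mul_comm]

theorem S_ii {R : M6 → M6 → Prop} (HR : PRel R) {w : F4} (HB : PBase R w)
    (w0 : w ≠ 0) (w1 : w ≠ 1) (w2 : w ^ 2 = w + 1) {c : F4} (hc : c ≠ 0) :
    SF R ![1, c, 1] := by
  refine Sclos HR HB (fun h0 => by simpa using congrFun h0 0) ?_
  intro a' _ hb
  have c3 := F4_cube hc
  have k0 := hb _ (S0 HR HB)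
  have k1 := hb _ (S_i HR HB w0 w1 w2 hc)
  have k2 := hb _ (F_of_E02 HR HB one_ne_zero HB.e02)
  simp [dt_three] at k0 k1 k2
  have k3 := k1.mp (by linear_combination c3 + F4_two 1)
  have k4 := k2.mp (F4_two 1)
  exact vec_smul (k := a' 0) k0 (by ring) (solve2 hc k3) (by rw [F4_eq_of_add k4]; ring)

theorem S_iii {R : M6 → M6 → Prop} (HR : PRel R) {w : F4} (HB : PBase R w)
    (w0 : w ≠ 0) (w1 : w ≠ 1) (w2 : w ^ 2 = w + 1) {c : F4} (hc : c ≠ 0) :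
    SF R ![0, c, 1] := by
  refine Sclos HR HB (fun h0 => by simpa using congrFun h0 2) ?_
  intro a' _ hb
  have c3 := F4_cube hc
  have k0 := hb _ (S0 HR HB)
  have k2 := hb _ (S2 HR HB)
  have k1 := hb _ (S_ii HR HB w0 w1 w2 hc)
  simp [dt_three] at k0 k1 k2
  have k3 := k1.mp (by linear_combination c3 + F4_two 1)
  rw [k0, zero_add, add_comm] at k3
  exact vec_smul (k := a' 2) k2 (by simp [k0]) (solve2 hc k3) (by ring)

theorem S_iv {R : M6 → M6 → Prop} (HR : PRel R) {w : F4} (HB : PBase R w)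
    (w0 : w ≠ 0) (w1 : w ≠ 1) (w2 : w ^ 2 = w + 1) {c d : F4} (hc : c ≠ 0)
    (hd : d ≠ 0) : SF R ![1, c, d] := by
  refine Sclos HR HB (fun h0 => by simpa using congrFun h0 0) ?_
  intro a' _ hb
  have c3 := F4_cube hc
  have d3 := F4_cube hd
  have k0 := hb _ (S0 HR HB)
  have k1 := hb _ (S_i HR HB w0 w1 w2 hc)
  have k2 := hb _ (S_iii HR HB w0 w1 w2 (mul_ne_zero hc (pow_ne_zero 2 hd)))
  simp [dt_three] at k0 k1 k2
  have k3 := k1.mp (by linear_combination c3 + F4_two 1)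
  have k4 := k2.mp (by linear_combination d ^ 4 * c3 + d * d3 + F4_two d)
  have k5 := solve2 hc k3
  refine vec_smul (k := a' 0) k0 (by ring) k5 ?_
  symm
  apply F4_eq_of_add
  rw [k5] at k4
  linear_combination k4 - a' 0 * (d ^ 4 * c3 + d * d3)

theorem S_v {R : M6 → M6 → Prop} (HR : PRel R) {w : F4} (HB : PBase R w)
    (w0 : w ≠ 0) (w1 : w ≠ 1) (w2 : w ^ 2 = w + 1) {d : F4}
    (hd : d ≠ 0) : SF R ![1, 0, d] := by
  refine Sclos HR HB (fun h0 => by simpa using congrFun h0 0) ?_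
  intro a' _ hb
  have d3 := F4_cube hd
  have k0 := hb _ (S0 HR HB)
  have k1 := hb _ (S1 HR HB)
  have k2 := hb _ (S_iv HR HB w0 w1 w2 one_ne_zero hd)
  simp [dt_three] at k0 k1 k2
  have k3 := k2.mp (by linear_combination d3 + F4_two 1)
  rw [k1, add_zero] at k3
  exact vec_smul (k := a' 0) k0 (by ring) (by simp [k1]) (solve2 hd k3)

theorem S_scale {R : M6 → M6 → Prop} (HR : PRel R)
    {a : Fin 3 → F4} {c : F4} (hc : c ≠ 0) (h : SF R a) : SF R (c • a) := by
  have h1 := HR.scale' _ _ c hc (HR.scale _ _ c hc h.1)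
  have h2 := HR.scale' _ _ c hc (HR.scale _ _ c hc h.2)
  simp only [Prod.smul_mk, smul_zero] at h1 h2
  exact ⟨h1, h2⟩

theorem S_all {R : M6 → M6 → Prop} (HR : PRel R) {w : F4} (HB : PBase R w)
    (w0 : w ≠ 0) (w1 : w ≠ 1) (w2 : w ^ 2 = w + 1) {a : Fin 3 → F4} (ha : a ≠ 0) :
    SF R a := by
  have norm1 : ∀ y z : F4, SF R ![1, y, z] := by
    intro y z
    by_cases hy : y = 0 <;> by_cases hz : z = 0
    · rw [hy, hz]; exact S0 HR HB
    · rw [hy]; exact S_v HR HB w0 w1 w2 hz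
    · rw [hz]; exact S_i HR HB w0 w1 w2 hy
    · exact S_iv HR HB w0 w1 w2 hy hz
  by_cases h0 : a 0 = 0
  · by_cases h2 : a 2 = 0
    · have h1 : a 1 ≠ 0 := by
        intro h1; apply ha; funext i; fin_cases i <;> simp [h0, h1, h2]
      have := S_scale HR h1 (S1 HR HB)
      convert this using 1
      funext i; fin_cases i <;> simp [h0, h2]
    · have hS : SF R ![0, a 1 / a 2, 1] := by
        by_cases h1 : a 1 = 0
        · rw [h1, zero_div]; exact S2 HR HB
        · exact S_iii HR HB w0 w1 w2 (div_ne_zero h1 h2)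
      have := S_scale HR h2 hS
      convert this using 1
      funext i; fin_cases i
      · simp [h0]
      · simp [mul_div_cancel₀ _ h2]
      · simp
  · have := S_scale HR h0 (norm1 (a 1 / a 0) (a 2 / a 0))
    convert this using 1
    funext i; fin_cases i
    · simp
    · simp [mul_div_cancel₀ _ h0]
    · simp [mul_div_cancel₀ _ h0]

theorem dt_prop {b b' : Fin 3 → F4} (hb : b ≠ 0) (h : ∀ u, dt b u = 0 ↔ dt b' u = 0) :
    ∃ c : F4, c ≠ 0 ∧ b' = c • b := by
  obtain ⟨i, hi⟩ := Function.ne_iff.mp hb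
  have hdi : ∀ (v : Fin 3 → F4) (i : Fin 3) (c : F4), dt v (Pi.single i c) = v i * c ^ 2 := by
    intro v i c
    unfold dt
    rw [Finset.sum_eq_single i]
    · simp
    · intro j _ hj; simp [hj]
    · simp
  have hadd : ∀ v x y : Fin 3 → F4, dt v (x + y) = dt v x + dt v y := by
    intro v x y
    simp only [dt_three, Pi.add_apply, F4_sq_add]; ring
  have hi' : b' i ≠ 0 := by
    have := h (Pi.single i 1)
    rw [hdi, hdi] at this
    simp at this hi
    tauto
  refine ⟨b' i / b i, div_ne_zero hi' hi, ?_⟩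
  funext j
  have hj := (h (Pi.single i (b j ^ 2) + Pi.single j (b i ^ 2))).mp (by
    rw [hadd, hdi, hdi, ← pow_mul, ← pow_mul, F4_pow4, F4_pow4, mul_comm, F4_two])
  rw [hadd, hdi, hdi, ← pow_mul, ← pow_mul, F4_pow4, F4_pow4] at hj
  have := F4_eq_of_add hj
  simp only [Pi.smul_apply, smul_eq_mul]
  rw [div_mul_eq_mul_div, this]
  exact (mul_div_cancel_right₀ _ hi).symm

theorem exists_cd {a b : Fin 3 → F4} (ha : a ≠ 0) (hb : b ≠ 0) (hab : dt a b = 0) :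
    ∃ c d, dt c d = 1 ∧ dt a d = 1 ∧ dt b c = 1 := by
  have key : ∀ v : Fin 3 → F4, v ≠ 0 → ∃ u, dt v u = 1 := by
    intro v hv
    obtain ⟨i, hi⟩ := Function.ne_iff.mp hv
    refine ⟨Pi.single i (v i), ?_⟩
    unfold dt
    rw [Finset.sum_eq_single i]
    · rw [Pi.single_eq_same, ← F4_cube hi]; ring
    · intro j _ hj; simp [hj]
    · simp
  obtain ⟨c, hc⟩ := key b hb
  have hna : a ∉ Submodule.span F4 {c - a} := by
    intro hmem
    obtain ⟨t, ht⟩ := Submodule.mem_span_singleton.mp hmem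
    have hcb : dt c b = 1 := by rw [dt_symm, hc, one_pow]
    have h1 : dt a b = t * (dt c b - dt a b) := by
      conv_lhs => rw [← ht]
      simp only [dt_three, Pi.smul_apply, Pi.sub_apply, smul_eq_mul]; ring
    rw [hab, hcb, sub_zero, mul_one] at h1
    apply ha
    rw [← ht, ← h1, zero_smul]
  obtain ⟨f, hf1, hf2⟩ := Submodule.exists_le_ker_of_notMem hna
  have hfd : ∀ v, f v = dt v (fun i => f (Pi.single i 1) ^ 2) := by
    intro v
    conv_lhs => rw [pi_eq_sum_univ' v]
    rw [map_sum]
    unfold dt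
    refine Finset.sum_congr rfl fun i _ => ?_
    rw [map_smul, ← pow_mul, F4_pow4, smul_eq_mul]
  have hfc : f c = f a := by
    have : f (c - a) = 0 := hf2 (Submodule.mem_span_singleton_self _)
    rw [map_sub] at this
    exact sub_eq_zero.mp this
  refine ⟨c, f a • (fun i => f (Pi.single i 1) ^ 2), ?_, ?_, hc⟩
  · rw [dt_smul_right, ← hfd, hfc, ← pow_succ, F4_cube hf1]
  · rw [dt_smul_right, ← hfd, ← pow_succ, F4_cube hf1]

theorem rigid_half {R : M6 → M6 → Prop} (HR : PRel R) {w : F4} (HB : PBase R w)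
    (w0 : w ≠ 0) (w1 : w ≠ 1) (w2 : w ^ 2 = w + 1) {a b : Fin 3 → F4} (ha : a ≠ 0)
    (hb : b ≠ 0) (hq : hh (a, b) (a, b) = 0) :
    ∃ l : F4, l ≠ 0 ∧ hh (a, l • b) (a, l • b) = 0 ∧ R (a, b) (a, l • b) := by
  obtain ⟨⟨a', b'⟩, h0, hq', hr⟩ := HR.tot (a, b) (fun h => ha (congrArg Prod.fst h)) hq
  have hE : ∀ u, dt b u = 0 ↔ dt b' u = 0 := by
    intro u
    by_cases hu : u = 0
    · simp [hu, dt_zero_right]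
    · have := HR.perp _ _ _ _ hr (S_all HR HB w0 w1 w2 hu).1
      simpa [hh_dt, dt_zero_right] using this
  have hF : ∀ u, dt a u = 0 ↔ dt a' u = 0 := by
    intro u
    by_cases hu : u = 0
    · simp [hu, dt_zero_right]
    · have := HR.perp _ _ _ _ hr (S_all HR HB w0 w1 w2 hu).2
      simpa [hh_dt, dt_zero_right] using this
  obtain ⟨k, hk, rfl⟩ := dt_prop ha hF
  obtain ⟨m, hm, rfl⟩ := dt_prop hb hE
  refine ⟨k⁻¹ * m, mul_ne_zero (inv_ne_zero hk) hm, ?_, ?_⟩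
  · simp only [hh_dt, dt_smul_left, dt_smul_right] at hq' ⊢
    field_simp
    apply mul_left_cancel₀ hk
    linear_combination hq'
  · have := HR.scale _ _ k⁻¹ (inv_ne_zero hk) hr
    simpa [smul_smul, hk] using this

theorem rigid_one {R : M6 → M6 → Prop} (HR : PRel R) {w : F4} (HB : PBase R w)
    (w0 : w ≠ 0) (w1 : w ≠ 1) (w2 : w ^ 2 = w + 1) {a b : Fin 3 → F4}
    (hq : dt a b = 1) : R (a, b) (a, b) := by
  have ha : a ≠ 0 := by rintro rfl; simp [dt_zero_left] at hq
  have hb : b ≠ 0 := by rintro rfl; simp [dt_zero_right] at hq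
  obtain ⟨l, hl, hql, hr⟩ := rigid_half HR HB w0 w1 w2 ha hb
    (by simp [hh_dt, dt_symm a b, hq, F4_two])
  have : l = 1 := by
    simp only [hh_dt, dt_smul_left, dt_smul_right, dt_symm a b, hq] at hql
    apply mul_left_cancel₀ hl
    apply F4_eq_of_add
    linear_combination hql
  rwa [this, one_smul] at hr

theorem rigid {R : M6 → M6 → Prop} (HR : PRel R) {w : F4} (HB : PBase R w)
    (w0 : w ≠ 0) (w1 : w ≠ 1) (w2 : w ^ 2 = w + 1) {p : M6} (hp : p ≠ 0)
    (hq : hh p p = 0) : R p p := by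
  obtain ⟨a, b⟩ := p
  by_cases ha : a = 0
  · subst ha
    exact (S_all HR HB w0 w1 w2 (fun h => hp (by rw [h]; rfl))).2
  by_cases hb : b = 0
  · subst hb
    exact (S_all HR HB w0 w1 w2 ha).1
  have hs : dt a b ^ 2 = dt a b := by
    rw [hh_dt, dt_symm a b] at hq
    exact (F4_eq_of_add hq).symm
  rcases F4_bool hs with h | h
  · obtain ⟨c, d, h1, h2, h3⟩ := exists_cd ha hb h
    obtain ⟨l, hl, -, hr⟩ := rigid_half HR HB w0 w1 w2 ha hb hq
    have := (HR.perp _ _ _ _ hr (rigid_one HR HB w0 w1 w2 h1)).mp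
      (by rw [hh_dt, h2, h3, F4_two])
    simp only [hh_dt, dt_smul_left, h2, h3] at this
    have hl1 : l = 1 := by
      symm
      apply F4_eq_of_add
      linear_combination this
    rwa [hl1, one_smul] at hr
  · exact rigid_one HR HB w0 w1 w2 h


/-! ## Semilinear isometries -/

structure SI (φ : F4 ≃+* F4) (g : V6 ≃ V6) : Prop where
  add : ∀ x y, g (x + y) = g x + g y
  smul : ∀ (c : F4) (x), g (c • x) = φ c • g x
  iso : ∀ x y, hm (g x) (g y) = φ (hm x y)

theorem SI.gammaU {φ : F4 ≃+* F4} {g : V6 ≃ V6} (H : SI φ g) : IsGammaU φ g := by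
  refine ⟨H.add, H.smul, fun x hx => ?_⟩
  rw [← hm_self] at hx ⊢
  rw [H.iso, hx, map_zero]

theorem SI.map_zero' {φ : F4 ≃+* F4} {g : V6 ≃ V6} (H : SI φ g) : g 0 = 0 := by
  have := H.smul 0 0
  simpa using this

noncomputable def phiM (φ : F4 ≃+* F4) : M6 ≃ M6 :=
  Equiv.prodCongr (Equiv.piCongrRight fun _ => φ.toEquiv) (Equiv.piCongrRight fun _ => φ.toEquiv)

theorem phiM_fst (φ : F4 ≃+* F4) (p : M6) (i : Fin 3) : (phiM φ p).1 i = φ (p.1 i) := rfl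
theorem phiM_snd (φ : F4 ≃+* F4) (p : M6) (i : Fin 3) : (phiM φ p).2 i = φ (p.2 i) := rfl

theorem exists_SI {e f e' f' : Fin 3 → V6} (H : Hyp e f) (H' : Hyp e' f') (φ : F4 ≃+* F4) :
    ∃ g, SI φ g ∧ ∀ p : M6, g (io e f p) = io e' f' (phiM φ p) := by
  let g : V6 ≃ V6 := ((Equiv.ofBijective _ (io_bij H)).symm.trans (phiM φ)).trans
    (Equiv.ofBijective _ (io_bij H'))
  have hg : ∀ p : M6, g (io e f p) = io e' f' (phiM φ p) := by
    intro p
    have : (Equiv.ofBijective _ (io_bij H)).symm (io e f p) = p :=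
      (Equiv.ofBijective _ (io_bij H)).symm_apply_apply p
    simp only [g, Equiv.trans_apply, this]
    rfl
  refine ⟨g, ⟨?_, ?_, ?_⟩, hg⟩
  · intro x y
    obtain ⟨p, rfl⟩ := (io_bij H).2 x
    obtain ⟨r, rfl⟩ := (io_bij H).2 y
    rw [← io_add, hg, hg, hg, ← io_add]
    congr 1
    ext i <;> simp [phiM_fst, phiM_snd]
  · intro c x
    obtain ⟨p, rfl⟩ := (io_bij H).2 x
    rw [← io_smul, hg, hg, ← io_smul]
    congr 1
    ext i <;> simp [phiM_fst, phiM_snd]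
  · intro x y
    obtain ⟨p, rfl⟩ := (io_bij H).2 x
    obtain ⟨r, rfl⟩ := (io_bij H).2 y
    rw [hg, hg, io_hm H', io_hm H]
    simp [hh, phiM_fst, phiM_snd]

/-! ## The correspondence of points induced by a permutation of planes -/

theorem icNum_inj {d d' : ℕ} (hd : d ≤ 3) (hd' : d' ≤ 3) (h : icNum d = icNum d') : d = d' := by
  unfold icNum at h
  interval_cases d <;> interval_cases d' <;> first | rfl | (exfalso; norm_num at h)

theorem finrank_inf_le (P Q : FermatPlane) : Module.finrank F4 ↥(P.val ⊓ Q.val) ≤ 3 := by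
  exact (Submodule.finrank_mono inf_le_left).trans_eq P.2.1

theorem PreservesNuP.dim {σ : Equiv.Perm FermatPlane} (h : PreservesNuP σ) (P Q : FermatPlane) :
    Module.finrank F4 ↥((σ P).val ⊓ (σ Q).val) = Module.finrank F4 ↥(P.val ⊓ Q.val) :=
  icNum_inj (finrank_inf_le _ _) (finrank_inf_le _ _) (h P Q)

theorem PreservesNuP.symm {σ : Equiv.Perm FermatPlane} (h : PreservesNuP σ) :
    PreservesNuP σ.symm := by
  intro P Q
  have := h (σ.symm P) (σ.symm Q)
  have e1 : σ (σ.symm P) = P := σ.apply_symm_apply P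
  have e2 : σ (σ.symm Q) = Q := σ.apply_symm_apply Q
  rw [e1, e2] at this
  exact this.symm

structure Cor (σ : Equiv.Perm FermatPlane) (x x' : V6) : Prop where
  x0 : x ≠ 0
  xq : hm x x = 0
  y0 : x' ≠ 0
  yq : hm x' x' = 0
  mem : ∀ Q : FermatPlane, x ∈ Q.val ↔ x' ∈ (σ Q).val

theorem Cor.symm {σ : Equiv.Perm FermatPlane} {x x' : V6} (h : Cor σ x x') :
    Cor σ.symm x' x := by
  refine ⟨h.y0, h.yq, h.x0, h.xq, fun Q => ?_⟩
  rw [h.mem, Equiv.apply_symm_apply]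

theorem Cor.scale {σ : Equiv.Perm FermatPlane} {x x' : V6} (h : Cor σ x x') {c : F4} (hc : c ≠ 0) :
    Cor σ x (c • x') := by
  refine ⟨h.x0, h.xq, smul_ne_zero hc h.y0, ?_, fun Q => ?_⟩
  · rw [hm_smul_left, hm_smul_right, h.yq]; simp
  · rw [h.mem, Submodule.smul_mem_iff _ hc]

theorem quad_image {σ : Equiv.Perm FermatPlane} (h : PreservesNuP σ) {P P' R1 R2 : FermatPlane}
    {x : V6} (H : Quad P P' R1 R2 x) : ∃ x', Quad (σ P) (σ P') (σ R1) (σ R2) x' := by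
  have hPP : Module.finrank F4 ↥((σ P).val ⊓ (σ P').val) = 1 := by
    rw [h.dim, H.hPP, finrank_span_singleton H.hx]
  have hRR : Module.finrank F4 ↥((σ R1).val ⊓ (σ R2).val) = 1 := by
    rw [h.dim, H.hRR, finrank_span_singleton H.hx]
  obtain ⟨x', hx0, hx1, hx2⟩ := exists_of_finrank_inf (by rw [hPP]; exact one_ne_zero)
  have hspan : ∀ A B : Submodule F4 V6, Module.finrank F4 ↥(A ⊓ B) = 1 → x' ∈ A → x' ∈ B →
      A ⊓ B = Submodule.span F4 {x'} := by
    intro A B hAB hA hB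
    symm
    apply Submodule.eq_of_le_of_finrank_eq
    · rw [Submodule.span_singleton_le_iff_mem]; exact ⟨hA, hB⟩
    · rw [hAB, finrank_span_singleton hx0]
  have hsp := hspan _ _ hPP hx1 hx2
  have hR : ∀ R : FermatPlane, Module.finrank F4 ↥((σ P).val ⊓ R.val) = 2 →
      Module.finrank F4 ↥((σ P').val ⊓ R.val) = 2 → x' ∈ R.val := by
    intro R k1 k2
    have k3 := Submodule.finrank_sup_add_finrank_inf_eq ((σ P).val ⊓ R.val) ((σ P').val ⊓ R.val)
    have k4 : Module.finrank F4 ↥((σ P).val ⊓ R.val ⊔ (σ P').val ⊓ R.val) ≤ 3 := by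
      exact (Submodule.finrank_mono (sup_le inf_le_right inf_le_right)).trans_eq R.2.1
    obtain ⟨y, hy0, hy1, hy2⟩ := exists_of_finrank_inf
      (A := (σ P).val ⊓ R.val) (B := (σ P').val ⊓ R.val) (by rw [k1, k2] at k3; intro hz; erw [hz] at k3; omega)
    exact mem_of_smul_span hy0 hy1.2 (by rw [← hsp]; exact ⟨hy1.1, hy2.1⟩)
  have d1 := (h.dim P R1).trans H.h1
  have d2 := (h.dim P R2).trans H.h2
  have d3 := (h.dim P' R1).trans H.h3
  have d4 := (h.dim P' R2).trans H.h4
  exact ⟨x', hx0, hsp, hspan _ _ hRR (hR _ d1 d3) (hR _ d2 d4), d1, d2, d3, d4⟩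

theorem Quad.iso {P P' R1 R2 : FermatPlane} {x : V6} (H : Quad P P' R1 R2 x) : hm x x = 0 := by
  have hxP : x ∈ P.val ⊓ P'.val := by rw [H.hPP]; exact Submodule.mem_span_singleton_self x
  exact plane_q P hxP.1

theorem Cor.exists {σ : Equiv.Perm FermatPlane} (h : PreservesNuP σ) {x : V6} (hx0 : x ≠ 0)
    (hx : hm x x = 0) : ∃ x', Cor σ x x' := by
  obtain ⟨P, P', R1, R2, H⟩ := exists_quad hx0 hx
  obtain ⟨x', H'⟩ := quad_image h H
  refine ⟨x', hx0, hx, H'.hx, H'.iso, fun Q => ?_⟩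
  rw [quad_mem H, quad_mem H', h.dim, h.dim, h.dim, h.dim]

theorem Cor.perp_of {σ : Equiv.Perm FermatPlane} {x x' y y' : V6} (hx : Cor σ x x')
    (hy : Cor σ y y') (h : hm x y = 0) : hm x' y' = 0 := by
  obtain ⟨Q, h1, h2⟩ := exists_plane_pair hx.x0 hx.xq hy.xq h
  exact plane_ti (σ Q) ((hx.mem Q).mp h1) ((hy.mem Q).mp h2)

theorem Cor.perp {σ : Equiv.Perm FermatPlane} {x x' y y' : V6} (hx : Cor σ x x')
    (hy : Cor σ y y') : hm x y = 0 ↔ hm x' y' = 0 :=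
  ⟨Cor.perp_of hx hy, Cor.perp_of hx.symm hy.symm⟩

theorem Cor.uniq {σ : Equiv.Perm FermatPlane} {x x' x'' : V6} (h : Cor σ x x')
    (h' : Cor σ x x'') : ∃ c : F4, c • x' = x'' := by
  obtain ⟨P, P', R1, R2, H⟩ := exists_quad h.y0 h.yq
  have hxP : x' ∈ P.val ⊓ P'.val := by rw [H.hPP]; exact Submodule.mem_span_singleton_self x'
  have key : ∀ Q : FermatPlane, x' ∈ Q.val → x'' ∈ Q.val := by
    intro Q hQ
    have h1 := h.mem (σ.symm Q)
    have h2 := h'.mem (σ.symm Q)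
    rw [Equiv.apply_symm_apply] at h1 h2
    exact h2.mp (h1.mpr hQ)
  have : x'' ∈ P.val ⊓ P'.val := ⟨key _ hxP.1, key _ hxP.2⟩
  rw [H.hPP] at this
  exact Submodule.mem_span_singleton.mp this

theorem Cor.line {σ : Equiv.Perm FermatPlane} (hσ : PreservesNuP σ) {e f E F : Fin 3 → V6}
    (H : Hyp e f) (H' : Hyp E F)
    (he : ∀ i, Cor σ (e i) (E i)) (hf : ∀ i, Cor σ (f i) (F i)) {i j : Fin 3} (hij : i ≠ j)
    {t : F4} (ht : t ≠ 0) : ∃ c : F4, c ≠ 0 ∧ Cor σ (e i + t • e j) (E i + c • E j) := by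
  have hx0 : e i + t • e j ≠ 0 := by
    intro h0
    have := congrArg (fun v => hm v (f i)) h0
    simp [hm_add_left, hm_smul_left, H.ef, hm_zero_left, hij.symm] at this
  have hxq : hm (e i + t • e j) (e i + t • e j) = 0 := by
    simp [hm_add_left, hm_smul_left, hm_add_right, hm_smul_right, H.ee]
  obtain ⟨z, hz⟩ := Cor.exists hσ hx0 hxq
  have hE : ∀ k, hm z (E k) = 0 := fun k => (hz.perp (he k)).mp (by
    simp [hm_add_left, hm_smul_left, H.ee])
  have hF : ∀ k, k ≠ i ∧ k ≠ j → hm z (F k) = 0 := fun k hk => (hz.perp (hf k)).mp (by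
    simp [hm_add_left, hm_smul_left, H.ef, hk.1.symm, hk.2.symm])
  have hi : hm z (F i) ≠ 0 := fun h0 => by
    have := (hz.perp (hf i)).mpr h0
    simp [hm_add_left, hm_smul_left, H.ef, hij.symm] at this
  have hj : hm z (F j) ≠ 0 := fun h0 => by
    have := (hz.perp (hf j)).mpr h0
    simp [hm_add_left, hm_smul_left, H.ef, hij, ht] at this
  have hzz : z = hm z (F i) • E i + hm z (F j) • E j := by
    conv_lhs => rw [hyp_expand H' z]
    rw [Finset.sum_eq_add i j hij]
    · simp [hE]
    · intro k _ hk
      rw [hE, hF k hk]; simp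
    · simp
    · simp
  refine ⟨(hm z (F i))⁻¹ * hm z (F j), mul_ne_zero (inv_ne_zero hi) hj, ?_⟩
  have := hz.scale (inv_ne_zero hi)
  have key : (hm z (F i))⁻¹ • z = E i + ((hm z (F i))⁻¹ * hm z (F j)) • E j := by
    generalize hm z (F i) = α at hi hzz
    generalize hm z (F j) = β at hzz
    rw [hzz, smul_add, smul_smul, smul_smul, inv_mul_cancel₀ hi, one_smul]
  rwa [key] at this

theorem exists_aut {w d : F4} (w0 : w ≠ 0) (w1 : w ≠ 1) (w2 : w ^ 2 = w + 1) (d0 : d ≠ 0)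
    (d1 : d ≠ 1) : ∃ φ : F4 ≃+* F4, φ w = d := by
  rcases F4_cases w0 w1 w2 d with h | h | h | h
  · exact absurd h d0
  · exact absurd h d1
  · exact ⟨RingEquiv.refl _, h.symm⟩
  · exact ⟨frobeniusEquiv F4 2, by rw [h]; rfl⟩

theorem exists_hyp : ∃ e f : Fin 3 → V6, Hyp e f := by
  obtain ⟨z, h0, hz, -⟩ := Hyp.exists_iso (k := 0) (by norm_num) Fin.elim0 Fin.elim0
  obtain ⟨e, f, H, -⟩ := exists_hyp_point h0 hz
  exact ⟨e, f, H⟩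

theorem Hyp.ne_e {e f : Fin 3 → V6} (H : Hyp e f) (i : Fin 3) : e i ≠ 0 := H.li.ne_zero i

theorem Hyp.swap {e f : Fin 3 → V6} (H : Hyp e f) : Hyp f e := ⟨H.ff, H.ee, H.fe⟩

theorem Hyp.scale {e f : Fin 3 → V6} (H : Hyp e f) {c : Fin 3 → F4} (hc : ∀ i, c i ≠ 0) :
    Hyp (fun i => c i • e i) (fun i => c i • f i) := by
  refine ⟨?_, ?_, ?_⟩ <;> intro i j
  · simp [hm_smul_left, hm_smul_right, H.ee]
  · simp [hm_smul_left, hm_smul_right, H.ff]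
  · simp only [hm_smul_left, hm_smul_right, H.ef]
    by_cases h : i = j
    · subst h
      simp only [if_true]
      linear_combination F4_cube (hc i)
    · simp [h]

theorem frame_image {σ : Equiv.Perm FermatPlane} (hσ : PreservesNuP σ) {e f : Fin 3 → V6}
    (H : Hyp e f) : ∃ E F, Hyp E F ∧ (∀ i, Cor σ (e i) (E i)) ∧ (∀ i, Cor σ (f i) (F i)) := by
  choose E hE using fun i => Cor.exists hσ (H.ne_e i) (H.ee i i)
  choose F hF using fun i => Cor.exists hσ (H.swap.ne_e i) (H.ff i i)
  have hne : ∀ i, hm (E i) (F i) ≠ 0 := fun i h0 => by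
    have := ((hE i).perp (hF i)).mpr h0
    simp [H.ef] at this
  refine ⟨E, fun i => hm (E i) (F i) • F i, ⟨?_, ?_, ?_⟩, hE, fun i => (hF i).scale (hne i)⟩
  · intro i j
    exact ((hE i).perp (hE j)).mp (H.ee i j)
  · intro i j
    rw [hm_smul_left, hm_smul_right, ((hF i).perp (hF j)).mp (H.ff i j)]; simp
  · intro i j
    by_cases h : i = j
    · subst h
      simp only [if_true, hm_smul_right]
      rw [← pow_succ, F4_cube (hne i)]
    · rw [if_neg h, hm_smul_right, ((hE i).perp (hF j)).mp (by rw [H.ef, if_neg h]), mul_zero]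

theorem surj_aux {σ : Equiv.Perm FermatPlane} (hσ : PreservesNuP σ) :
    ∃ (φ : F4 ≃+* F4) (g : V6 ≃ V6), SI φ g ∧ ∀ x, x ≠ 0 → hm x x = 0 → Cor σ x (g x) := by
  obtain ⟨w, w0, w1, w2⟩ := exists_omega
  obtain ⟨e, f, H⟩ := exists_hyp
  obtain ⟨E0, F0, H0, hE0, hF0⟩ := frame_image hσ H
  obtain ⟨c1, hc1, l1⟩ := Cor.line hσ H H0 hE0 hF0 (i := 0) (j := 1) (by decide) one_ne_zero
  obtain ⟨c2, hc2, l2⟩ := Cor.line hσ H H0 hE0 hF0 (i := 0) (j := 2) (by decide) one_ne_zero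
  have hc : ∀ i, (![1, c1, c2] : Fin 3 → F4) i ≠ 0 := by
    intro i; fin_cases i
    · exact one_ne_zero
    · exact hc1
    · exact hc2
  obtain ⟨E, hEdef⟩ : ∃ E : Fin 3 → V6, E = fun i => (![1, c1, c2] : Fin 3 → F4) i • E0 i := ⟨_, rfl⟩
  obtain ⟨F, hFdef⟩ : ∃ F : Fin 3 → V6, F = fun i => (![1, c1, c2] : Fin 3 → F4) i • F0 i := ⟨_, rfl⟩
  have H' : Hyp E F := by rw [hEdef, hFdef]; exact H0.scale hc
  have hE : ∀ i, Cor σ (e i) (E i) := fun i => by rw [hEdef]; exact (hE0 i).scale (hc i)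
  have hF : ∀ i, Cor σ (f i) (F i) := fun i => by rw [hFdef]; exact (hF0 i).scale (hc i)
  have m1 : Cor σ (e 0 + e 1) (E 0 + E 1) := by simpa [hEdef] using l1
  have m2 : Cor σ (e 0 + e 2) (E 0 + E 2) := by simpa [hEdef] using l2
  obtain ⟨d, d0, l3⟩ := Cor.line hσ H H' hE hF (i := 0) (j := 1) (by decide) w0
  have d1 : d ≠ 1 := by
    rintro rfl
    rw [one_smul] at l3
    obtain ⟨c, hc⟩ := Cor.uniq m1.symm l3.symm
    have k0 := congrArg (fun v => hm v (f 0)) hc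
    have k1 := congrArg (fun v => hm v (f 1)) hc
    simp [hm_add_left, hm_smul_left, H.ef] at k0 k1
    exact w1 (by rw [← k1, k0])
  obtain ⟨φ, hφ⟩ := exists_aut w0 w1 w2 d0 d1
  obtain ⟨g, hg, hgio⟩ := exists_SI H H' φ
  refine ⟨φ, g, hg, ?_⟩
  let R : M6 → M6 → Prop := fun p r => Cor σ (io e f p) (g (io e f r))
  have gne : ∀ x, x ≠ 0 → g x ≠ 0 := fun x hx h0 => hx (g.injective (h0.trans hg.map_zero'.symm))
  have io0 : io e f 0 = 0 := by simp [io]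
  have ione : ∀ p, p ≠ 0 ↔ io e f p ≠ 0 := by
    intro p
    rw [not_iff_not]
    constructor
    · rintro rfl; exact io0
    · intro h; exact (io_bij H).1 (h.trans io0.symm)
  have HR : PRel R := by
    refine ⟨?_, ?_, ?_, ?_⟩
    · intro p hp hq
      obtain ⟨x', hx'⟩ := Cor.exists hσ ((ione p).mp hp) (by rw [io_hm H, hq])
      obtain ⟨r, hr⟩ := (io_bij H).2 (g.symm x')
      have hgr : g (io e f r) = x' := by rw [hr, Equiv.apply_symm_apply]
      refine ⟨r, ?_, ?_, ?_⟩
      · rw [ione]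
        intro h0
        rw [h0, hg.map_zero'] at hgr
        exact hx'.y0 hgr.symm
      · have := hx'.yq
        rw [← hgr, hg.iso, io_hm H] at this
        exact (map_eq_zero φ).mp this
      · change Cor σ _ _
        rw [hgr]; exact hx'
    · intro p r p' r' h1 h2
      have := Cor.perp h1 h2
      rwa [hg.iso, map_eq_zero, io_hm H, io_hm H] at this
    · intro p r c hc h
      change Cor σ _ _
      rw [io_smul, hg.smul]
      exact Cor.scale h ((map_ne_zero φ).mpr hc)
    · intro p r c hc h
      change Cor σ _ _
      rw [io_smul]
      exact (Cor.scale (Cor.symm h) hc).symm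
  have HB : PBase R w := by
    refine ⟨?_, ?_, ?_, ?_, ?_, ?_, ?_, ?_, ?_⟩ <;> change Cor σ _ _ <;> rw [hgio] <;>
      simp [io, Fin.sum_univ_three, phiM_fst, phiM_snd, hφ]
    · exact hE 0
    · exact hE 1
    · exact hE 2
    · exact hF 0
    · exact hF 1
    · exact hF 2
    · exact m1
    · exact m2
    · exact l3
  intro x hx0 hxq
  obtain ⟨p, rfl⟩ := (io_bij H).2 x
  rw [io_hm H] at hxq
  exact rigid HR HB w0 w1 w2 ((ione p).mpr hx0) hxq

theorem surj_main {σ : Equiv.Perm FermatPlane} (hσ : PreservesNuP σ) :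
    ∃ (φ : F4 ≃+* F4) (g : V6 ≃ V6), SI φ g ∧
      ∀ P : FermatPlane, ((σ P).val : Set V6) = g '' (P.val : Set V6) := by
  obtain ⟨φ, g, hg, h⟩ := surj_aux hσ
  refine ⟨φ, g, hg, fun P => ?_⟩
  ext y
  obtain ⟨x, rfl⟩ := g.surjective y
  rw [g.injective.mem_set_image]
  change g x ∈ (σ P).val ↔ x ∈ P.val
  by_cases hx0 : x = 0
  · rw [hx0, hg.map_zero']; simp
  by_cases hxq : hm x x = 0
  · exact ((h x hx0 hxq).mem P).symm
  · constructor
    · intro hmem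
      have := plane_q _ hmem
      rw [hg.iso] at this
      exact absurd ((map_eq_zero φ).mp this) hxq
    · intro hmem
      exact absurd (plane_q _ hmem) hxq

theorem inj_main (g : V6 ≃ V6) (h : ∀ P : FermatPlane, g '' (P.val : Set V6) = (P.val : Set V6))
    (p : FermatPoint) : g '' (p.val : Set V6) = (p.val : Set V6) := by
  have hne : p.val ≠ ⊥ := by
    intro hb
    have := p.2.1
    rw [hb] at this
    simp at this
  obtain ⟨x, hx, hx0⟩ := Submodule.exists_mem_ne_zero_of_ne_bot hne
  have hxq : hm x x = 0 := by rw [hm_self]; exact p.2.2 x hx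
  obtain ⟨P, P', R1, R2, H⟩ := exists_quad hx0 hxq
  have hp : p.val = P.val ⊓ P'.val := by
    rw [H.hPP]
    symm
    apply Submodule.eq_of_le_of_finrank_eq
    · rw [Submodule.span_singleton_le_iff_mem]; exact hx
    · rw [finrank_span_singleton hx0]; exact p.2.1.symm
  rw [hp, Submodule.coe_inf, Set.image_inter g.injective, h, h]

/-! ## Counting orthonormal tuples -/

noncomputable def cnt (p : V6 → Prop) (a : F4) : ℕ := Nat.card {x : V6 // p x ∧ hm x x = a}

theorem cnt_congr {p r : V6 → Prop} (h : ∀ x, p x ↔ r x) (a : F4) : cnt p a = cnt r a := by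
  have : p = r := funext fun x => propext (h x)
  rw [this]

theorem hm_decomp {u y : V6} (hu : hm u u = 1) (hy : hm y u = 0) (c : F4) :
    hm (y + c • u) (y + c • u) = hm y y + c ^ 3 ∧ hm (y + c • u) u = c := by
  have hy' : hm u y = 0 := by rw [hm_symm y u, hy]; ring
  constructor
  · simp only [hm_add_left, hm_add_right, hm_smul_left, hm_smul_right, hu, hy, hy']; ring
  · simp only [hm_add_left, hm_smul_left, hu, hy]; ring

theorem add_smul_self (x u : V6) (c : F4) : x + c • u + c • u = x := by
  rw [add_assoc, ← add_smul, F4_two, zero_smul, add_zero]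

noncomputable def cntEquiv {p : V6 → Prop} {u : V6} (hu : hm u u = 1)
    (hp : ∀ x (c : F4), p x → p (x + c • u)) (a : F4) :
    {x : V6 // p x ∧ hm x x = a} ≃
      Σ c : F4, {y : V6 // (p y ∧ hm y u = 0) ∧ hm y y = a + c ^ 3} where
  toFun x := ⟨hm x.1 u, x.1 + hm x.1 u • u, by
    have h0 : hm (x.1 + hm x.1 u • u) u = 0 := by
      rw [hm_add_left, hm_smul_left, hu, mul_one, F4_two]
    refine ⟨⟨hp _ _ x.2.1, h0⟩, ?_⟩
    have := (hm_decomp hu h0 (hm x.1 u)).1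
    rw [add_smul_self, x.2.2] at this
    have t := congrArg (fun z => z + hm x.1 u ^ 3) this
    simp only [add_assoc, F4_two, add_zero] at t
    exact t.symm⟩
  invFun t := ⟨t.2.1 + t.1 • u, hp _ _ t.2.2.1.1, by
    rw [(hm_decomp hu t.2.2.1.2 t.1).1, t.2.2.2, add_assoc, F4_two, add_zero]⟩
  left_inv x := by
    apply Subtype.ext
    exact add_smul_self _ _ _
  right_inv t := by
    obtain ⟨c, y, ⟨hy1, hy2⟩, hy3⟩ := t
    have h1 := (hm_decomp hu hy2 c).2
    refine Sigma.ext h1 ?_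
    refine (Subtype.heq_iff_coe_eq ?_).mpr ?_
    · intro x
      simp only [h1]
    · simp only [h1]
      exact add_smul_self _ _ _

theorem cnt_step {p : V6 → Prop} {u : V6} (hu : hm u u = 1)
    (hp : ∀ x (c : F4), p x → p (x + c • u)) (a : F4) :
    cnt p a = cnt (fun x => p x ∧ hm x u = 0) a + 3 * cnt (fun x => p x ∧ hm x u = 0) (a + 1) := by
  classical
  letI : Fintype F4 := Fintype.ofFinite F4
  unfold cnt
  rw [Nat.card_congr (cntEquiv hu hp a), Nat.card_sigma]
  rw [← Finset.add_sum_erase Finset.univ _ (Finset.mem_univ (0 : F4))]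
  have hz : a + (0 : F4) ^ 3 = a := by ring
  have hs : ∀ c ∈ Finset.univ.erase (0 : F4),
      Nat.card {y : V6 // (p y ∧ hm y u = 0) ∧ hm y y = a + c ^ 3} =
      Nat.card {y : V6 // (p y ∧ hm y u = 0) ∧ hm y y = a + 1} := by
    intro c hc
    rw [F4_cube (Finset.ne_of_mem_erase hc)]
  rw [Finset.sum_congr rfl hs, Finset.sum_const, Finset.card_erase_of_mem (Finset.mem_univ _),
    Finset.card_univ, ← Nat.card_eq_fintype_card, natcard_F4, hz, smul_eq_mul]

theorem cnt_step' {p r : V6 → Prop} {u : V6} (hu : hm u u = 1)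
    (hp : ∀ x (c : F4), p x → p (x + c • u)) (hr : ∀ x, r x ↔ p x ∧ hm x u = 0) :
    cnt p 0 = cnt r 0 + 3 * cnt r 1 ∧ cnt p 1 = cnt r 1 + 3 * cnt r 0 := by
  have h0 := cnt_step hu hp 0
  have h1 := cnt_step hu hp 1
  rw [zero_add] at h0
  rw [F4_two] at h1
  rw [cnt_congr hr, cnt_congr hr]
  exact ⟨h0, h1⟩

theorem hm_single_right (x : V6) (k : Fin 6) : hm x (Pi.single k 1) = x k := by
  unfold hm
  rw [Finset.sum_eq_single k]
  · simp
  · intro b _ hb; simp [Pi.single_eq_of_ne hb]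
  · simp

theorem cnt_low (k : ℕ) (hk : k < 6) :
    cnt (fun x => ∀ i : Fin 6, i.val < k → x i = 0) 0
      = cnt (fun x => ∀ i : Fin 6, i.val < k + 1 → x i = 0) 0
        + 3 * cnt (fun x => ∀ i : Fin 6, i.val < k + 1 → x i = 0) 1 ∧
    cnt (fun x => ∀ i : Fin 6, i.val < k → x i = 0) 1
      = cnt (fun x => ∀ i : Fin 6, i.val < k + 1 → x i = 0) 1
        + 3 * cnt (fun x => ∀ i : Fin 6, i.val < k + 1 → x i = 0) 0 := by
  apply cnt_step' (u := Pi.single ⟨k, hk⟩ 1)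
  · rw [hm_single_right, Pi.single_eq_same]
  · intro x c hx i hi
    have : i ≠ ⟨k, hk⟩ := fun h => by rw [h] at hi; exact absurd hi (lt_irrefl k)
    simp [hx i hi, Pi.single_eq_of_ne this]
  · intro x
    rw [hm_single_right]
    constructor
    · intro h
      exact ⟨fun i hi => h i (by omega), h _ (Nat.lt_succ_self k)⟩
    · rintro ⟨h1, h2⟩ i hi
      by_cases hik : i.val < k
      · exact h1 i hik
      · have : i = ⟨k, hk⟩ := Fin.ext (by simp only; omega)
        rw [this]; exact h2

theorem cnt_top : cnt (fun _ => True) 0 = 2080 ∧ cnt (fun _ => True) 1 = 2016 := by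
  have z6 : cnt (fun x => ∀ i : Fin 6, i.val < 6 → x i = 0) 0 = 1 := by
    unfold cnt
    rw [Nat.card_eq_one_iff_unique]
    refine ⟨⟨fun a b => Subtype.ext (funext fun i => ?_)⟩, ⟨0, ?_, hm_zero_left _⟩⟩
    · rw [a.2.1 i i.2, b.2.1 i i.2]
    · intro i _; rfl
  have s6 : cnt (fun x => ∀ i : Fin 6, i.val < 6 → x i = 0) 1 = 0 := by
    unfold cnt
    have : IsEmpty {x : V6 // (∀ i : Fin 6, i.val < 6 → x i = 0) ∧ hm x x = 1} := by
      refine ⟨fun a => ?_⟩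
      have h0 : a.1 = 0 := funext fun i => a.2.1 i i.2
      have := a.2.2
      rw [h0, hm_zero_left] at this
      exact zero_ne_one this
    exact Nat.card_of_isEmpty
  have l0 := cnt_low 0 (by norm_num)
  have l1 := cnt_low 1 (by norm_num)
  have l2 := cnt_low 2 (by norm_num)
  have l3 := cnt_low 3 (by norm_num)
  have l4 := cnt_low 4 (by norm_num)
  have l5 := cnt_low 5 (by norm_num)
  norm_num only at l0 l1 l2 l3 l4 l5
  have t : ∀ a, cnt (fun _ => True) a = cnt (fun x => ∀ i : Fin 6, i.val < 0 → x i = 0) a :=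
    fun a => cnt_congr (fun x => by simp) a
  rw [t, t]
  constructor <;> omega

def ON (k : ℕ) : Type :=
  {v : Fin k → V6 // ∀ i j, hm (v i) (v j) = if i = j then 1 else 0}

def perp {k : ℕ} (v : Fin k → V6) (x : V6) : Prop := ∀ i, hm x (v i) = 0

noncomputable def onEquiv (k : ℕ) :
    ON (k + 1) ≃ Σ v : ON k, {x : V6 // perp v.1 x ∧ hm x x = 1} where
  toFun v := ⟨⟨fun i => v.1 i.succ, fun i j => by rw [v.2]; simp⟩, v.1 0,
    fun i => by rw [v.2, if_neg (Fin.succ_ne_zero i).symm], by rw [v.2]; simp⟩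
  invFun t := ⟨Fin.cons t.2.1 t.1.1, by
    intro i j
    refine Fin.cases ?_ (fun i => ?_) i <;> refine Fin.cases ?_ (fun j => ?_) j
    · simpa using t.2.2.2
    · simpa [(Fin.succ_ne_zero j).symm] using t.2.2.1 j
    · rw [hm_symm]
      simpa [Fin.succ_ne_zero i] using t.2.2.1 i
    · simpa using t.1.2 i j⟩
  left_inv v := by
    apply Subtype.ext
    funext i
    refine Fin.cases ?_ (fun i => ?_) i <;> simp
  right_inv t := by
    obtain ⟨⟨v, hv⟩, x, hx⟩ := t
    rfl

structure TC (k z s n : ℕ) : Prop where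
  card : Nat.card (ON k) = n
  cz : ∀ v : ON k, cnt (perp v.1) 0 = z
  cs : ∀ v : ON k, cnt (perp v.1) 1 = s

theorem TC.succ {k z s n : ℕ} (h : TC k (z + 3 * s) (s + 3 * z) n) :
    TC (k + 1) z s (n * (s + 3 * z)) := by
  have key : ∀ v : ON (k + 1), cnt (perp v.1) 0 = z ∧ cnt (perp v.1) 1 = s := by
    intro v
    have h1 := h.cz (onEquiv k v).1
    have h2 := h.cs (onEquiv k v).1
    have := cnt_step' (p := perp (onEquiv k v).1.1) (r := perp v.1) (u := v.1 0)
      (by rw [v.2]; simp) (by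
        intro x c hx i
        rw [hm_add_left, hx i, hm_smul_left]
        have : hm (v.1 0) ((onEquiv k v).1.1 i) = 0 := (onEquiv k v).2.2.1 i
        rw [this]; ring) (by
        intro x
        constructor
        · intro hx; exact ⟨fun i => hx i.succ, hx 0⟩
        · rintro ⟨hx, hx0⟩ i
          exact Fin.cases hx0 (fun i => hx i) i)
    omega
  refine ⟨?_, fun v => (key v).1, fun v => (key v).2⟩
  haveI : Finite (ON k) := by unfold ON; infer_instance
  letI : Fintype (ON k) := Fintype.ofFinite _
  rw [Nat.card_congr (onEquiv k), Nat.card_sigma]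
  have : ∀ v ∈ (Finset.univ : Finset (ON k)),
      Nat.card {x : V6 // perp v.1 x ∧ hm x x = 1} = s + 3 * z := fun v _ => h.cs v
  rw [Finset.sum_congr rfl this, Finset.sum_const, Finset.card_univ, ← Nat.card_eq_fintype_card,
    h.card, smul_eq_mul]

theorem card_ON6 : Nat.card (ON 6) = 82771476480 := by
  have t0 : TC 0 2080 2016 1 := by
    have e : ∀ (v : ON 0) a, cnt (perp v.1) a = cnt (fun _ => True) a := fun v a =>
      cnt_congr (fun x => ⟨fun _ => trivial, fun _ i => i.elim0⟩) a
    refine ⟨?_, fun v => by rw [e, cnt_top.1], fun v => by rw [e, cnt_top.2]⟩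
    rw [Nat.card_eq_one_iff_unique]
    exact ⟨⟨fun a b => Subtype.ext (funext fun i => i.elim0)⟩, ⟨Fin.elim0, fun i => i.elim0⟩⟩
  have t1 := TC.succ (z := 496) (s := 528) t0
  have t2 := TC.succ (z := 136) (s := 120) t1
  have t3 := TC.succ (z := 28) (s := 36) t2
  have t4 := TC.succ (z := 10) (s := 6) t3
  have t5 := TC.succ (z := 1) (s := 3) t4
  have t6 := TC.succ (z := 1) (s := 0) t5
  exact t6.card

/-! ## Counting the semilinear isometries -/

theorem card_aut_F4 : Nat.card (F4 ≃+* F4) = 2 := by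
  obtain ⟨w, w0, w1, w2⟩ := exists_omega
  rw [Nat.card_eq_two_iff]
  refine ⟨RingEquiv.refl _, frobeniusEquiv F4 2, ?_, ?_⟩
  · intro h
    have h1 : w = w ^ 2 := by
      have := congrArg (fun φ : F4 ≃+* F4 => φ w) h
      exact this
    rcases F4_bool h1.symm with h | h
    · exact w0 h
    · exact w1 h
  · rw [Set.eq_univ_iff_forall]
    intro φ
    have ext2 : ∀ ψ : F4 ≃+* F4, φ w = ψ w → φ = ψ := by
      intro ψ h
      ext a
      rcases F4_cases w0 w1 w2 a with rfl | rfl | rfl | rfl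
      · simp
      · simp
      · exact h
      · rw [map_pow, map_pow, h]
    rcases F4_cases w0 w1 w2 (φ w) with h | h | h | h
    · exact absurd ((map_eq_zero φ).mp h) w0
    · exact absurd (φ.injective (h.trans (map_one φ).symm)) w1
    · left; exact ext2 _ h
    · right; exact ext2 _ h

theorem expand_std (x : V6) : x = ∑ i, x i • (Pi.single i 1 : V6) := by
  funext j
  simp [Finset.sum_apply, Pi.single_apply]

theorem SI.sum {φ : F4 ≃+* F4} {g : V6 ≃ V6} (H : SI φ g) (x : V6) :
    g x = ∑ i, φ (x i) • g (Pi.single i 1) := by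
  have hs : ∀ s : Finset (Fin 6), g (∑ i ∈ s, x i • (Pi.single i 1 : V6))
      = ∑ i ∈ s, φ (x i) • g (Pi.single i 1) := by
    classical
    intro s
    induction s using Finset.induction_on with
    | empty => simpa using H.map_zero'
    | insert a s ha ih => rw [Finset.sum_insert ha, Finset.sum_insert ha, H.add, H.smul, ih]
  conv_lhs => rw [expand_std x]
  exact hs _

def Gam : Type := {t : (F4 ≃+* F4) × (V6 ≃ V6) // SI t.1 t.2}

noncomputable def gmap (φ : F4 ≃+* F4) (v : Fin 6 → V6) (x : V6) : V6 := ∑ i, φ (x i) • v i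

theorem gmap_coord (φ : F4 ≃+* F4) (v : ON 6) (x : V6) (j : Fin 6) :
    hm (gmap φ v.1 x) (v.1 j) = φ (x j) := by
  rw [gmap, hm_sum_left]
  simp [hm_smul_left, v.2]

theorem gmap_bij (φ : F4 ≃+* F4) (v : ON 6) : Function.Bijective (gmap φ v.1) := by
  apply Function.Injective.bijective_of_finite
  intro x y h
  funext j
  apply φ.injective
  rw [← gmap_coord φ v, h, gmap_coord]

theorem gmap_SI (φ : F4 ≃+* F4) (v : ON 6) : SI φ (Equiv.ofBijective _ (gmap_bij φ v)) := by
  refine ⟨?_, ?_, ?_⟩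
  · intro x y
    simp [gmap, add_smul, Finset.sum_add_distrib]
  · intro c x
    simp [gmap, mul_smul, Finset.smul_sum]
  · intro x y
    simp only [Equiv.ofBijective_apply]
    rw [show gmap φ v.1 y = ∑ i, φ (y i) • v.1 i from rfl, hm_sum_right]
    simp only [hm_smul_right, gmap_coord]
    simp only [hm, map_sum, map_mul, map_pow]
    exact Finset.sum_congr rfl fun i _ => mul_comm _ _

noncomputable def gamEquiv : Gam ≃ (F4 ≃+* F4) × ON 6 where
  toFun t := (t.1.1, ⟨fun i => t.1.2 (Pi.single i 1), fun i j => by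
    rw [t.2.iso, hm_single_right]
    by_cases h : i = j
    · subst h; simp
    · simp [h, Ne.symm h]⟩)
  invFun p := ⟨(p.1, Equiv.ofBijective _ (gmap_bij p.1 p.2)), gmap_SI p.1 p.2⟩
  left_inv t := by
    obtain ⟨⟨φ, g⟩, H⟩ := t
    apply Subtype.ext
    refine Prod.ext rfl ?_
    ext1 x
    exact (H.sum x).symm
  right_inv p := by
    refine Prod.ext rfl (Subtype.ext (funext fun i => ?_))
    have : ∀ j, p.1 ((Pi.single i 1 : V6) j) = if j = i then 1 else 0 := by
      intro j
      by_cases h : j = i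
      · subst h; simp
      · simp [h]
    change gmap p.1 p.2.1 (Pi.single i 1) = p.2.1 i
    simp [gmap, this]

theorem card_Gam : Nat.card Gam = 2 * 82771476480 := by
  rw [Nat.card_congr gamEquiv, Nat.card_prod, card_aut_F4, card_ON6]

/-! ## Isometries act on planes -/

def imgSub {φ : F4 ≃+* F4} {g : V6 ≃ V6} (H : SI φ g) (P : Submodule F4 V6) : Submodule F4 V6 where
  carrier := g '' (P : Set V6)
  add_mem' := by
    rintro _ _ ⟨x, hx, rfl⟩ ⟨y, hy, rfl⟩
    exact ⟨x + y, P.add_mem hx hy, H.add x y⟩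
  zero_mem' := ⟨0, P.zero_mem, H.map_zero'⟩
  smul_mem' := by
    rintro c _ ⟨x, hx, rfl⟩
    refine ⟨φ.symm c • x, P.smul_mem _ hx, ?_⟩
    rw [H.smul, RingEquiv.apply_symm_apply]

theorem finrank_image {A B : Submodule F4 V6} {g : V6 ≃ V6}
    (h : (B : Set V6) = g '' (A : Set V6)) : Module.finrank F4 ↥B = Module.finrank F4 ↥A := by
  have hc : Nat.card ↥B = Nat.card ↥A := by
    have := Nat.card_image_of_injective g.injective (A : Set V6)
    rw [← h] at this
    exact this
  rw [Module.natCard_eq_pow_finrank (K := F4) (V := ↥B),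
    Module.natCard_eq_pow_finrank (K := F4) (V := ↥A), natcard_F4] at hc
  exact Nat.pow_right_injective (le_of_eq_of_le rfl (by norm_num : 2 ≤ 4)) hc

theorem FermatPlane.finite : Finite FermatPlane := by
  unfold FermatPlane
  haveI : Finite (Submodule F4 (Fin 6 → F4)) :=
    Finite.of_injective (fun P => (P : Set (Fin 6 → F4))) SetLike.coe_injective
  infer_instance

theorem SI.perm {φ : F4 ≃+* F4} {g : V6 ≃ V6} (H : SI φ g) :
    ∃ σ : Equiv.Perm FermatPlane, PreservesNuP σ ∧
      ∀ P, ((σ P).val : Set V6) = g '' (P.val : Set V6) := by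
  have := FermatPlane.finite
  let s : FermatPlane → FermatPlane := fun P => ⟨imgSub H P.val, by
    refine ⟨(finrank_image (g := g) (A := P.val) (B := imgSub H P.val) rfl).trans P.2.1, ?_⟩
    rintro _ ⟨x, hx, rfl⟩
    exact H.gammaU.2.2 x (P.2.2 x hx)⟩
  have hs : ∀ P, ((s P).val : Set V6) = g '' (P.val : Set V6) := fun P => rfl
  have hinj : Function.Injective s := by
    intro P Q h
    apply Subtype.ext
    apply SetLike.coe_injective
    apply g.injective.image_injective
    exact (hs P).symm.trans ((congrArg (fun R : FermatPlane => (R.val : Set V6)) h).trans (hs Q))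
  refine ⟨Equiv.ofBijective s hinj.bijective_of_finite, ?_, hs⟩
  intro P Q
  have : Module.finrank F4 ↥((s P).val ⊓ (s Q).val) = Module.finrank F4 ↥(P.val ⊓ Q.val) := by
    apply finrank_image (g := g)
    rw [Submodule.coe_inf, Submodule.coe_inf, Set.image_inter g.injective]
    rfl
  exact congrArg icNum this

theorem SI.scale {φ : F4 ≃+* F4} {g : V6 ≃ V6} (H : SI φ g) (c : F4ˣ) :
    SI φ (g.trans (MulAction.toPerm c)) := by
  have hc : ∀ x, (g.trans (MulAction.toPerm c)) x = (c : F4) • g x := fun x => rfl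
  refine ⟨?_, ?_, ?_⟩
  · intro x y; simp only [hc, H.add, smul_add]
  · intro a x; simp only [hc, H.smul, smul_smul, mul_comm]
  · intro x y
    simp only [hc, hm_smul_left, hm_smul_right, H.iso]
    linear_combination (φ (hm x y)) * F4_cube c.ne_zero

theorem fibre {φ φ' : F4 ≃+* F4} {g g' : V6 ≃ V6} (H : SI φ g) (H' : SI φ' g')
    (h : ∀ P : FermatPlane, g '' (P.val : Set V6) = g' '' (P.val : Set V6)) :
    φ' = φ ∧ ∃ c : F4, c ≠ 0 ∧ ∀ x, g' x = c • g x := by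
  have L1 : ∀ x, x ≠ 0 → hm x x = 0 → ∃ c : F4, g' x = c • g x := by
    intro x hx0 hxq
    obtain ⟨P, P', R1, R2, Q⟩ := exists_quad hx0 hxq
    have hxP : x ∈ P.val ⊓ P'.val := by rw [Q.hPP]; exact Submodule.mem_span_singleton_self x
    have key : ∀ P : FermatPlane, x ∈ P.val → g.symm (g' x) ∈ P.val := by
      intro P hP
      have : g' x ∈ g '' (P.val : Set V6) := by rw [h]; exact ⟨x, hP, rfl⟩
      obtain ⟨y, hy, hyx⟩ := this
      rw [← hyx, Equiv.symm_apply_apply]; exact hy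
    have hm' : g.symm (g' x) ∈ P.val ⊓ P'.val := ⟨key _ hxP.1, key _ hxP.2⟩
    rw [Q.hPP] at hm'
    obtain ⟨c, hc⟩ := Submodule.mem_span_singleton.mp hm'
    refine ⟨φ c, ?_⟩
    rw [← H.smul, hc, Equiv.apply_symm_apply]
  choose! c hc using L1
  -- comparing coefficients of a sum
  have L2 : ∀ x y u v : V6, ∀ t : F4, hm x x = 0 → hm y y = 0 →
      hm (x + t • y) (x + t • y) = 0 →
      hm x u = 1 → hm y u = 0 → hm x v = 0 → hm y v = 1 → φ' t * c y = c x * φ t := by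
    intro x y u v t hx hy hxy h1 h2 h3 h4
    have ne : ∀ z u : V6, hm z u = 1 → z ≠ 0 := by
      rintro _ u hz rfl
      rw [hm_zero_left] at hz; exact zero_ne_one hz
    have hxt : hm (x + t • y) u = 1 := by rw [hm_add_left, hm_smul_left, h1, h2]; ring
    have e := hc _ (ne _ _ hxt) hxy
    rw [H'.add, H'.smul, hc x (ne _ _ h1) hx, hc y (ne _ _ h4) hy, H.add, H.smul] at e
    have k1 := congrArg (fun z => hm z (g u)) e
    have k2 := congrArg (fun z => hm z (g v)) e
    simp only [hm_add_left, hm_smul_left, H.iso, h1, h2, h3, h4, map_one, map_zero, mul_zero,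
      mul_one, add_zero, zero_add] at k1 k2
    rw [k1, ← k2]
  obtain ⟨e, f, HH⟩ := exists_hyp
  have ce : ∀ i j, i ≠ j → ∀ t : F4, φ' t * c (e j) = c (e i) * φ t := by
    intro i j hij t
    refine L2 (e i) (e j) (f i) (f j) t (HH.ee _ _) (HH.ee _ _) ?_ ?_ ?_ ?_ ?_
    · simp [hm_add_left, hm_add_right, hm_smul_left, hm_smul_right, HH.ee]
    · simp [HH.ef]
    · simp [HH.ef, hij.symm]
    · simp [HH.ef, hij]
    · simp [HH.ef]
  have ce0 : ∀ i, c (e i) = c (e 0) := by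
    intro i
    by_cases hi : i = 0
    · rw [hi]
    · have := ce i 0 hi 1
      simpa using this.symm
  have cf : ∀ i, c (f i) = c (e 0) := by
    intro i
    have := L2 (e i) (f i) (f i) (e i) 1 (HH.ee _ _) (HH.ff _ _) (by
      simp [hm_add_left, hm_add_right, HH.ee, HH.ff, HH.ef, HH.fe, F4_two]) (by simp [HH.ef])
      (HH.ff _ _) (HH.ee _ _) (by simp [HH.fe])
    simp only [map_one, one_mul, mul_one] at this
    rw [this, ce0]
  have he0 : e 0 ≠ 0 := HH.ne_e 0
  have hc0 : c (e 0) ≠ 0 := by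
    intro h0
    have := hc (e 0) he0 (HH.ee _ _)
    rw [h0, zero_smul, ← H'.map_zero'] at this
    exact he0 (g'.injective this)
  have hφ : φ' = φ := by
    ext t
    have := ce 0 1 (by decide) t
    rw [ce0 1, mul_comm] at this
    exact mul_left_cancel₀ hc0 this
  refine ⟨hφ, c (e 0), hc0, fun x => ?_⟩
  have hce : ∀ i, g' (e i) = c (e 0) • g (e i) := fun i => by
    rw [hc (e i) (HH.ne_e i) (HH.ee _ _), ce0]
  have hcf : ∀ i, g' (f i) = c (e 0) • g (f i) := fun i => by
    rw [hc (f i) (HH.swap.ne_e i) (HH.ff _ _), cf]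
  obtain ⟨p, rfl⟩ := (io_bij HH).2 x
  simp only [io, Fin.sum_univ_three, H.add, H'.add, H.smul, H'.smul, hce, hcf, hφ, smul_add,
    smul_smul, mul_comm]

theorem card_aut : Nat.card {σ : Equiv.Perm FermatPlane // PreservesNuP σ} = 6 * 9196830720 := by
  have hsec : ∀ σ : {σ : Equiv.Perm FermatPlane // PreservesNuP σ}, ∃ t : Gam,
      ∀ P : FermatPlane, ((σ.1 P).val : Set V6) = t.1.2 '' (P.val : Set V6) := by
    intro σ
    obtain ⟨φ, g, H, h⟩ := surj_main σ.2
    exact ⟨⟨(φ, g), H⟩, h⟩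
  choose s hs using hsec
  let F : F4ˣ × {σ : Equiv.Perm FermatPlane // PreservesNuP σ} → Gam := fun p =>
    ⟨((s p.2).1.1, (s p.2).1.2.trans (MulAction.toPerm p.1)), (s p.2).2.scale p.1⟩
  have hF : ∀ p x, (F p).1.2 x = (p.1 : F4) • (s p.2).1.2 x := fun p x => rfl
  have himg : ∀ p (P : FermatPlane), ((p.2.1 P).val : Set V6) = (F p).1.2 '' (P.val : Set V6) := by
    intro p P
    rw [hs]
    ext y
    constructor
    · rintro ⟨x, hx, rfl⟩
      refine ⟨(s p.2).1.1.symm (p.1⁻¹ : F4ˣ) • x, P.val.smul_mem _ hx, ?_⟩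
      rw [hF, (s p.2).2.smul, RingEquiv.apply_symm_apply, smul_smul]
      simp
    · rintro ⟨x, hx, rfl⟩
      refine ⟨(s p.2).1.1.symm (p.1 : F4) • x, P.val.smul_mem _ hx, ?_⟩
      rw [hF, (s p.2).2.smul, RingEquiv.apply_symm_apply]
  have hbij : Function.Bijective F := by
    constructor
    · rintro ⟨c, σ⟩ ⟨c', σ'⟩ h
      have hσ : σ = σ' := by
        apply Subtype.ext
        ext1 P
        apply Subtype.ext
        apply SetLike.coe_injective
        exact (himg (c, σ) P).trans ((congrArg (fun t : Gam => t.1.2 '' (P.val : Set V6)) h).trans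
          (himg (c', σ') P).symm)
      subst hσ
      obtain ⟨e, f, HH⟩ := exists_hyp
      have h1 : (c : F4) • (s σ).1.2 (e 0) = (c' : F4) • (s σ).1.2 (e 0) :=
        congrArg (fun t : Gam => t.1.2 (e 0)) h
      have hne : (s σ).1.2 (e 0) ≠ 0 := fun h0 =>
        HH.ne_e 0 ((s σ).1.2.injective (h0.trans (s σ).2.map_zero'.symm))
      have h2 : (c : F4) = c' := smul_left_injective F4 hne h1
      rw [Units.ext h2]
    · rintro ⟨⟨φ, g⟩, H⟩
      obtain ⟨σ, hσ, h⟩ := SI.perm H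
      obtain ⟨h1, c, hc, h2⟩ := fibre (s ⟨σ, hσ⟩).2 H (fun P => (hs ⟨σ, hσ⟩ P).symm.trans (h P))
      refine ⟨(Units.mk0 c hc, ⟨σ, hσ⟩), Subtype.ext (Prod.ext h1.symm ?_)⟩
      ext1 x
      exact (h2 x).symm
  have hcard := Nat.card_congr (Equiv.ofBijective F hbij)
  rw [Nat.card_prod, card_Gam, Nat.card_units, natcard_F4] at hcard
  omega
/-- the natural homomorphism `ρ_P : PΓU(6,4) → Aut(P_X, ν_P)` is
an isomorphism: every `ν_P`-preserving permutation of the 891 planes is induced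
by a semilinear projective transformation preserving `X` (surjectivity); such a
transformation acting trivially on all planes acts trivially on `X(F₄)`
(injectivity); and `|Aut(P_X, ν_P)| = 6·9196830720 = |PΓU(6,4)|`. -/
theorem rhoP_isomorphism :
    (∀ σ : Equiv.Perm FermatPlane, PreservesNuP σ →
      ∃ (φ : F4 ≃+* F4) (g : (Fin 6 → F4) ≃ (Fin 6 → F4)), IsGammaU φ g ∧
        ∀ P : FermatPlane,
          ((σ P).val : Set (Fin 6 → F4)) = g '' (P.val : Set (Fin 6 → F4))) ∧
    (∀ (φ : F4 ≃+* F4) (g : (Fin 6 → F4) ≃ (Fin 6 → F4)), IsGammaU φ g →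
      (∀ P : FermatPlane,
        g '' (P.val : Set (Fin 6 → F4)) = (P.val : Set (Fin 6 → F4))) →
      ∀ p : FermatPoint,
        g '' (p.val : Set (Fin 6 → F4)) = (p.val : Set (Fin 6 → F4))) ∧
    Nat.card {σ : Equiv.Perm FermatPlane // PreservesNuP σ}
      = 6 * 9196830720 := by
  refine ⟨fun σ hσ => ?_, fun _ g _ h p => inj_main g h p, card_aut⟩
  obtain ⟨φ, g, H, h⟩ := surj_main hσ
  exact ⟨φ, g, H.gammaU, h⟩
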